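/- The well-poised hypergeometric value ₇F₆(1/2, 5/4, 1/2, 1/2, 1/2, 1/2, 1/2; 1/4, 1, 1, 1, 1, 1; 1) = ∑_{k=0}^∞ (1+4k) ((1/2)_k / k!)⁶ equals (32i/π) times the integral of τ · η(τ)⁴ η(2τ)⁴ dτ along the straight segment in the upper half-plane from τ = (1+i)/2 to τ = (−1+i)/2; that is, ∑_{k=0}^∞ (1+4k)((1/2)_k / k!)⁶ = −(32i/π) ∫_{−1/2}^{1/2} (t + i/2) · η(t+i/2)⁴ η(2t+i)⁴ dt. (Here η(τ)⁴η(2τ)⁴ is the eta-product expression for the weight-4 newform f_{8.4.a.a} evaluated at τ/2, since f_{8.4.a.a}(τ) = η(2τ)⁴η(4τ)⁴.) -/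

import Mathlib

open Complex Real

/-- The Pochhammer symbol `(a)ₖ = a(a+1)⋯(a+k−1)`. -/
noncomputable def poch (a : ℂ) (k : ℕ) : ℂ := ∏ i ∈ Finset.range k, (a + i)

/-- The generalized hypergeometric series
`ₙFₙ₋₁(a₁,…,aₙ; b₂,…,bₙ; z) = ∑ₖ (a₁)ₖ⋯(aₙ)ₖ / ((1)ₖ(b₂)ₖ⋯(bₙ)ₖ) · zᵏ`. -/
noncomputable def hypF (upper lower : List ℂ) (z : ℂ) : ℂ :=
  ∑' k : ℕ, (upper.map fun a => poch a k).prod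
    / (poch 1 k * (lower.map fun b => poch b k).prod) * z ^ k

/-- The Dedekind eta function `η(τ) = e^{πiτ/12} ∏ₙ (1 − e^{2πinτ})` on the upper
half-plane (as a function on all of `ℂ`). -/
noncomputable def dedekindEta (τ : ℂ) : ℂ :=
  Complex.exp (Real.pi * Complex.I * τ / 12)
    * ∏' n : ℕ, (1 - Complex.exp (2 * Real.pi * Complex.I * ((n : ℂ) + 1) * τ))

namespace S13
open MeasureTheory Filter Topology Set

noncomputable def gg (τ : ℂ) : ℂ := dedekindEta τ ^ 4 * dedekindEta (2 * τ) ^ 4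

lemma eta_eq : dedekindEta = ModularForm.eta := by
  funext z
  unfold dedekindEta ModularForm.eta
  congr 1
  · simp only [Function.Periodic.qParam]
    congr 1
    push_cast
    ring
  · congr 1
    funext n
    rw [ModularForm.eta_q_eq_cexp]

lemma eta_diff {z : ℂ} (hz : 0 < z.im) : DifferentiableAt ℂ dedekindEta z := by
  rw [eta_eq]
  exact ModularForm.differentiableAt_eta_of_mem_upperHalfPlaneSet hz

lemma eta_S {z : ℂ} (hz : 0 < z.im) : dedekindEta (-1 / z) ^ 4 = - z ^ 2 * dedekindEta z ^ 4 := by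
  rw [eta_eq]
  have h := ModularForm.eta_comp_eq_csqrt_I_inv (show z ∈ UpperHalfPlane.upperHalfPlaneSet from hz)
  simp only [Function.comp, Pi.smul_apply, Pi.mul_apply, smul_eq_mul] at h
  rw [h]
  have e1 : ∀ w : ℂ, Complex.sqrt w ^ 4 = w ^ 2 := by
    intro w
    have : Complex.sqrt w ^ 2 = w := by
      simp [Complex.sqrt]
    calc Complex.sqrt w ^ 4 = (Complex.sqrt w ^ 2) ^ 2 := by ring
      _ = _ := by rw [this]
  rw [mul_pow, mul_pow, inv_pow, e1, e1, Complex.I_sq]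
  ring

lemma eta_T (z : ℂ) : dedekindEta (z + 1) ^ 4 = cexp (π * I / 3) * dedekindEta z ^ 4 := by
  unfold dedekindEta
  have : ∀ n : ℕ, cexp (2 * π * I * ((n : ℂ) + 1) * (z + 1)) = cexp (2 * π * I * ((n : ℂ) + 1) * z) := by
    intro n
    rw [Complex.exp_eq_exp_iff_exists_int]
    exact ⟨n + 1, by push_cast; ring⟩
  simp_rw [this]
  rw [mul_pow, mul_pow, ← mul_assoc]
  congr 1
  rw [← Complex.exp_nat_mul, ← Complex.exp_nat_mul, ← Complex.exp_add]
  congr 1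
  push_cast
  ring

lemma gg_T (z : ℂ) : gg (z + 1) = - gg z := by
  unfold gg
  rw [show 2 * (z + 1) = (2 * z + 1) + 1 by ring, eta_T, eta_T, eta_T]
  have : cexp (π * I / 3) * (cexp (π * I / 3) * cexp (π * I / 3)) = -1 := by
    rw [← Complex.exp_add, ← Complex.exp_add, ← Complex.exp_pi_mul_I]
    congr 1
    ring
  linear_combination (dedekindEta z ^ 4 * dedekindEta (2 * z) ^ 4) * this

lemma gg_S {z : ℂ} (hz : 0 < z.im) : gg (-1 / (2 * z)) = 4 * z ^ 4 * gg z := by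
  unfold gg
  have h2 : 0 < (2 * z).im := by simpa using hz
  have hz0 : z ≠ 0 := by rintro rfl; simp at hz
  rw [eta_S h2, show 2 * (-1 / (2 * z)) = -1 / z by field_simp, eta_S hz]
  ring

lemma gg_diff {z : ℂ} (hz : 0 < z.im) : DifferentiableAt ℂ gg z := by
  unfold gg
  have h2 : 0 < (2 * z).im := by simpa using hz
  exact ((eta_diff hz).pow 4).mul
    ((DifferentiableAt.comp z (eta_diff h2) (by fun_prop)).pow 4)

lemma gg_decay : ∃ C : ℝ, 0 < C ∧ ∀ z : ℂ, 1 / 2 ≤ z.im → ‖gg z‖ ≤ C * Real.exp (- π * z.im) := by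
  have hr : Real.exp (-π) < 1 := by simp [Real.pi_pos]
  have hc : ContinuousOn (fun q : ℂ => ∏' n : ℕ, (1 - q ^ (n + 1)))
      (Metric.closedBall 0 (Real.exp (-π))) :=
    ModularForm.differentiableOn_tprod_one_sub_pow.continuousOn.mono
      (Metric.closedBall_subset_ball hr)
  obtain ⟨B, hB⟩ := (isCompact_closedBall (0:ℂ) (Real.exp (-π))).exists_bound_of_continuousOn hc
  have key : ∀ z : ℂ, 1 / 2 ≤ z.im → ‖dedekindEta z‖ ≤ Real.exp (-π * z.im / 12) * B := by
    intro z hz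
    have e : dedekindEta z = cexp (π * I * z / 12) *
        (fun q : ℂ => ∏' n : ℕ, (1 - q ^ (n + 1))) (cexp (2 * π * I * z)) := by
      unfold dedekindEta
      congr 2
      funext n
      rw [← Complex.exp_nat_mul]
      congr 2
      push_cast; ring
    rw [e, norm_mul]
    have h1 : ‖cexp (π * I * z / 12)‖ = Real.exp (-π * z.im / 12) := by
      rw [Complex.norm_exp]
      congr 1
      simp [Complex.mul_re, Complex.mul_im]
    rw [h1]
    gcongr
    apply hB
    rw [mem_closedBall_zero_iff, Complex.norm_exp]
    apply Real.exp_le_exp.2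
    simp [Complex.mul_re, Complex.mul_im]
    nlinarith [Real.pi_pos]
  have hB0 : 0 ≤ B := le_trans (norm_nonneg _) (hB 0 (by simp [Real.exp_nonneg]))
  refine ⟨B ^ 8 + 1, by positivity, fun z hz => ?_⟩
  unfold gg
  rw [norm_mul, norm_pow, norm_pow]
  have h2 := key (2 * z) (by simp; linarith)
  have h1 := key z hz
  calc ‖dedekindEta z‖ ^ 4 * ‖dedekindEta (2 * z)‖ ^ 4
      ≤ (Real.exp (-π * z.im / 12) * B) ^ 4 * (Real.exp (-π * (2 * z).im / 12) * B) ^ 4 := by gcongr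
    _ = B ^ 8 * Real.exp (-π * z.im) := by
      have : Real.exp (-π * z.im / 12) ^ 4 * Real.exp (-π * (2 * z).im / 12) ^ 4 = Real.exp (-π * z.im) := by
        rw [← Real.exp_nat_mul, ← Real.exp_nat_mul, ← Real.exp_add]
        congr 1
        simp
        ring
      rw [← this]; ring
    _ ≤ _ := by
      gcongr
      linarith

lemma prim {f : ℂ → ℂ} (hf : ∀ z : ℂ, 0 < z.im → DifferentiableAt ℂ f z) :
    ∃ F : ℂ → ℂ, ∀ z : ℂ, 0 < z.im → HasDerivAt F (f z) z := by
  have h1 : ∀ w : ℂ, w ∈ Metric.ball (0:ℂ) 1 → 1 - w ≠ 0 := by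
    intro w hw h
    have : w = 1 := by linear_combination -h
    simp [this] at hw
  have h2 : ∀ w : ℂ, w ∈ Metric.ball (0:ℂ) 1 → 0 < (I * (1 + w) / (1 - w)).im := by
    intro w hw
    have e : (I * (1 + w) / (1 - w)).im = (1 - Complex.normSq w) / Complex.normSq (1 - w) := by
      rw [Complex.div_im]
      simp [Complex.normSq]
      ring
    rw [e]
    have : Complex.normSq w < 1 := by
      rw [Complex.normSq_eq_norm_sq]
      have : ‖w‖ < 1 := by simpa using hw
      nlinarith [norm_nonneg w]
    have : 0 < Complex.normSq (1 - w) := Complex.normSq_pos.2 (h1 w hw)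
    apply div_pos <;> linarith
  have hd : DifferentiableOn ℂ (fun w : ℂ => f (I * (1 + w) / (1 - w)) * (2 * I / (1 - w) ^ 2))
      (Metric.ball (0:ℂ) 1) := by
    intro w hw
    apply DifferentiableAt.differentiableWithinAt
    have := h1 w hw
    apply DifferentiableAt.mul
    · apply DifferentiableAt.comp (g := f) w (hf _ (h2 w hw))
      fun_prop (disch := assumption)
    · have : (1 - w) ^ 2 ≠ 0 := pow_ne_zero _ this
      fun_prop (disch := assumption)
  obtain ⟨H, hH⟩ := hd.isExactOn_ball
  refine ⟨fun z => H ((z - I) / (z + I)), fun z hz => ?_⟩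
  have hzI : z + I ≠ 0 := by
    intro h
    have := congrArg Complex.im h
    simp at this
    linarith
  have hb : (z - I) / (z + I) ∈ Metric.ball (0:ℂ) 1 := by
    rw [mem_ball_zero_iff, norm_div, div_lt_one (norm_pos_iff.2 hzI)]
    rw [← sq_lt_sq₀ (norm_nonneg _) (norm_nonneg _), ← Complex.normSq_eq_norm_sq,
      ← Complex.normSq_eq_norm_sq]
    simp [Complex.normSq]
    nlinarith
  have hder : HasDerivAt (fun z : ℂ => (z - I) / (z + I)) (2 * I / (z + I) ^ 2) z := by
    have := ((hasDerivAt_id z).sub_const I).div ((hasDerivAt_id z).add_const I) hzI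
    refine this.congr_deriv ?_
    simp only [id]
    ring
  have := (hH _ hb).comp z hder
  refine this.congr_deriv ?_
  have e1 : 1 - (z - I) / (z + I) = 2 * I / (z + I) := by field_simp; ring
  have e2 : I * (1 + (z - I) / (z + I)) / (1 - (z - I) / (z + I)) = z := by
    rw [e1]; field_simp; ring
  show f (I * (1 + (z - I) / (z + I)) / (1 - (z - I) / (z + I))) * (2 * I / (1 - (z - I) / (z + I)) ^ 2) * _ = _
  rw [e2, e1]
  field_simp

lemma const_of {F : ℂ → ℂ} (hF : ∀ z : ℂ, 0 < z.im → HasDerivAt F 0 z) {z w : ℂ}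
    (hz : 0 < z.im) (hw : 0 < w.im) : F z = F w := by
  have := (convex_halfSpace_im_gt (0:ℝ)).norm_image_sub_le_of_norm_hasDerivWithin_le (C := 0)
    (f := F) (f' := fun _ => 0) (fun x hx => (hF x hx).hasDerivWithinAt) (by simp) hw hz
  simpa [sub_eq_zero] using this

lemma horiz {F f : ℂ → ℂ} (hF : ∀ z : ℂ, 0 < z.im → HasDerivAt F (f z) z)
    (hf : ∀ z : ℂ, 0 < z.im → ‖f z‖ ≤ (1 + 2 * ‖z‖ ^ 2) * ‖gg z‖) :
    Tendsto (fun v : ℝ => F (v * I + 1) - F (v * I)) atTop (𝓝 0) := by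
  obtain ⟨C, hC, hg⟩ := gg_decay
  have hlim : Tendsto (fun v : ℝ => C * Real.exp 2 * Real.exp (-v)) atTop (𝓝 0) := by
    simpa using (Real.tendsto_exp_neg_atTop_nhds_zero.const_mul (C * Real.exp 2))
  refine squeeze_zero_norm' ?_ hlim
  filter_upwards [eventually_ge_atTop (1:ℝ)] with v hv
  have him : ∀ z ∈ segment ℝ ((v:ℂ) * I) (v * I + 1), z.im = v ∧ ‖z‖ ≤ v + 1 := by
    intro z hz
    rw [segment_eq_image'] at hz
    obtain ⟨t, ht, rfl⟩ := hz
    constructor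
    · simp
    · refine (norm_add_le _ _).trans ?_
      have : ‖(v:ℂ) * I‖ = v := by simp; linarith
      rw [this]
      simp
      rw [abs_of_nonneg ht.1]; exact ht.2
  have := (convex_segment ((v:ℂ) * I) (v * I + 1)).norm_image_sub_le_of_norm_hasDerivWithin_le
    (C := C * Real.exp 2 * Real.exp (-v))
    (f := F) (f' := f) (fun x hx => (hF x (by rw [(him x hx).1]; linarith)).hasDerivWithinAt) ?_
    (left_mem_segment _ _ _) (right_mem_segment _ _ _)
  · simpa using this
  · intro z hz
    obtain ⟨h1, h2⟩ := him z hz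
    refine (hf z (by rw [h1]; linarith)).trans ?_
    have h3 := hg z (by rw [h1]; linarith)
    rw [h1] at h3
    have h4 : 1 + 2 * ‖z‖ ^ 2 ≤ Real.exp (2 * (v + 1)) := by
      have := Real.quadratic_le_exp_of_nonneg (x := 2 * (v + 1)) (by linarith)
      have : ‖z‖ ^ 2 ≤ (v + 1) ^ 2 := by gcongr
      nlinarith
    calc (1 + 2 * ‖z‖ ^ 2) * ‖gg z‖ ≤ Real.exp (2 * (v + 1)) * (C * Real.exp (-π * v)) := by gcongr
      _ = C * Real.exp 2 * Real.exp (2 * v - π * v) := by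
        rw [show 2 * v - π * v = 2 * v + -π * v by ring, show 2 * (v + 1) = 2 + 2 * v by ring,
          Real.exp_add, Real.exp_add]; ring
      _ ≤ _ := by
        gcongr
        nlinarith [Real.pi_gt_three]

lemma gg_cont : ContinuousOn (fun v : ℝ => gg (v * I)) (Ioi 0) := by
  intro v hv
  apply ContinuousAt.continuousWithinAt
  apply ContinuousAt.comp (g := gg) (gg_diff (by simpa using hv)).continuousAt
  fun_prop

lemma int_of_bigO {f : ℝ → ℂ} {a b : ℝ} (h0 : 0 < b)
    (hf : ContinuousOn f (Ici a)) (ho : f =O[atTop] fun x => Real.exp (-b * x)) :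
    IntegrableOn f (Ioi a) :=
  integrableOn_Ici_iff_integrableOn_Ioi (by finiteness) |>.mp <|
    (hf.locallyIntegrableOn measurableSet_Ici).integrableOn_of_isBigO_atTop
    ho ⟨Ioi b, Ioi_mem_atTop b, exp_neg_integrableOn_Ioi b h0⟩

lemma gg_int1 {c : ℝ} (hc : 1 / 2 ≤ c) :
    IntegrableOn (fun v : ℝ => (1 + 2 * (v:ℂ) ^ 2) * gg (v * I)) (Ioi c) ∧
    IntegrableOn (fun v : ℝ => gg (v * I)) (Ioi c) := by
  obtain ⟨C, hC, hg⟩ := gg_decay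
  have hcont : ContinuousOn (fun v : ℝ => gg (v * I)) (Ici c) :=
    gg_cont.mono (fun x hx => lt_of_lt_of_le (by linarith : (0:ℝ) < c) hx)
  have hb : ∀ v : ℝ, 1 ≤ v → (1 + 2 * v ^ 2) * ‖gg (v * I)‖ ≤ C * Real.exp (-1 * v) := by
    intro v hv
    have h3 := hg (v * I) (by simp; linarith)
    simp at h3
    have h4 : 1 + 2 * v ^ 2 ≤ Real.exp (2 * v) := by
      have := Real.quadratic_le_exp_of_nonneg (x := 2 * v) (by linarith)
      nlinarith
    calc _ ≤ Real.exp (2 * v) * (C * Real.exp (-(π * v))) := by gcongr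
      _ = C * Real.exp (2 * v - π * v) := by
        rw [show 2 * v - π * v = 2 * v + -(π * v) by ring, Real.exp_add]; ring
      _ ≤ _ := by
        gcongr
        nlinarith [Real.pi_gt_three]
  constructor
  · refine int_of_bigO (b := 1) one_pos (ContinuousOn.mul (by fun_prop) hcont) ?_
    refine Asymptotics.IsBigO.of_bound C ?_
    filter_upwards [eventually_ge_atTop (1:ℝ)] with v hv
    have e : ‖(1 + 2 * (v:ℂ) ^ 2)‖ = 1 + 2 * v ^ 2 := by
      rw [show (1 + 2 * (v:ℂ) ^ 2) = ((1 + 2 * v ^ 2 : ℝ) : ℂ) by push_cast; ring,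
        Complex.norm_real, Real.norm_of_nonneg (by positivity)]
    rw [norm_mul, e, Real.norm_of_nonneg (Real.exp_pos _).le]
    exact hb v hv
  · refine int_of_bigO (b := 1) one_pos hcont ?_
    refine Asymptotics.IsBigO.of_bound C ?_
    filter_upwards [eventually_ge_atTop (1:ℝ)] with v hv
    rw [Real.norm_of_nonneg (Real.exp_pos _).le]
    refine le_trans ?_ (hb v hv)
    nlinarith [norm_nonneg (gg (v * I)), mul_nonneg (sq_nonneg v) (norm_nonneg (gg (v * I)))]

lemma gg_split : IntegrableOn (fun v : ℝ => gg (v * I)) (Ioi 0) ∧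
    ∫ v in Ioi (0:ℝ), gg (v * I) = ∫ v in Ioi (1 / √2), (1 + 2 * (v:ℂ) ^ 2) * gg (v * I) := by
  set c : ℝ := 1 / √2 with hcdef
  have hc0 : 0 < c := by positivity
  have hc2 : c ^ 2 = 1 / 2 := by rw [hcdef, div_pow, Real.sq_sqrt] <;> norm_num
  have hc : 1 / 2 ≤ c := by nlinarith
  obtain ⟨i1, i2⟩ := gg_int1 hc
  have himg : (fun v : ℝ => 1 / (2 * v)) '' Ioi c = Ioo 0 c := by
    ext x
    simp only [mem_image, mem_Ioi, mem_Ioo]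
    constructor
    · rintro ⟨v, hv, rfl⟩
      have : 0 < v := hc0.trans hv
      refine ⟨by positivity, ?_⟩
      rw [div_lt_iff₀ (by positivity)]
      nlinarith
    · rintro ⟨h1, h2⟩
      refine ⟨1 / (2 * x), ?_, by field_simp⟩
      rw [lt_div_iff₀ (by positivity)]
      nlinarith
  have hder : ∀ v ∈ Ioi c, HasDerivWithinAt (fun v : ℝ => 1 / (2 * v)) (-1 / (2 * v ^ 2)) (Ioi c) v := by
    intro v hv
    have hv0 : v ≠ 0 := (hc0.trans hv).ne'
    have := ((hasDerivAt_id v).const_mul 2).inv (by simpa using hv0)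
    simp only [id, mul_one] at this
    refine (this.congr_deriv ?_).hasDerivWithinAt.congr_of_eventuallyEq ?_ ?_
    · field_simp
    · filter_upwards with x; simp
    · simp
  have hinj : InjOn (fun v : ℝ => 1 / (2 * v)) (Ioi c) := by
    intro x hx y hy h
    have hx0 : x ≠ 0 := (hc0.trans hx).ne'
    have hy0 : y ≠ 0 := (hc0.trans hy).ne'
    field_simp at h
    exact h.symm
  have heq : ∀ v ∈ Ioi c, |(-1 / (2 * v ^ 2) : ℝ)| • gg (((1 / (2 * v) : ℝ) : ℂ) * I)
      = 2 * (v:ℂ) ^ 2 * gg (v * I) := by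
    intro v hv
    have hv0 : 0 < v := hc0.trans hv
    have hv' : (v:ℂ) ≠ 0 := by exact_mod_cast hv0.ne'
    have e : (((1 / (2 * v) : ℝ) : ℂ) * I) = -1 / (2 * (v * I)) := by
      push_cast
      field_simp
      simp
    rw [e, gg_S (by simpa using hv0), abs_of_nonpos (by
      apply div_nonpos_of_nonpos_of_nonneg <;> [norm_num; positivity])]
    rw [Complex.real_smul]
    push_cast
    rw [mul_pow, Complex.I_pow_four]
    field_simp
    norm_num
  have i3 : IntegrableOn (fun v : ℝ => 2 * (v:ℂ) ^ 2 * gg (v * I)) (Ioi c) := by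
    refine (i1.sub i2).congr (.of_forall fun v => ?_)
    simp only [Pi.sub_apply]
    ring
  have i4 : IntegrableOn (fun v : ℝ => gg (v * I)) (Ioo 0 c) := by
    rw [← himg, integrableOn_image_iff_integrableOn_abs_deriv_smul measurableSet_Ioi hder hinj]
    exact i3.congr_fun (fun v hv => (heq v hv).symm) measurableSet_Ioi
  have h4 : ∫ v in Ioo 0 c, gg (v * I) = ∫ v in Ioi c, 2 * (v:ℂ) ^ 2 * gg (v * I) := by
    rw [← himg, integral_image_eq_integral_abs_deriv_smul measurableSet_Ioi hder hinj]
    exact setIntegral_congr_fun measurableSet_Ioi heq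
  have i5 : IntegrableOn (fun v : ℝ => gg (v * I)) (Ioc 0 c) := by
    rwa [integrableOn_Ioc_iff_integrableOn_Ioo]
  have hu : Ioi (0:ℝ) = Ioc 0 c ∪ Ioi c := (Ioc_union_Ioi_eq_Ioi hc0.le).symm
  refine ⟨hu ▸ i5.union i2, ?_⟩
  rw [hu, setIntegral_union (Ioc_disjoint_Ioi le_rfl) measurableSet_Ioi i5 i2,
    integral_Ioc_eq_integral_Ioo, h4, ← integral_add i3 i2]
  congr 1
  funext v
  ring

lemma contour : ∫ t in (-1/2 : ℝ)..(1/2 : ℝ), ((t : ℂ) + I / 2) * gg ((t : ℂ) + I / 2)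
    = I * ∫ v in Ioi (0:ℝ), gg (v * I) := by
  obtain ⟨Φ, hΦ⟩ := prim (f := fun z => (1 - 2 * z ^ 2) * gg z)
    (fun z hz => DifferentiableAt.mul (by fun_prop) (gg_diff hz))
  obtain ⟨E, hE⟩ := prim (f := fun z => z * gg z)
    (fun z hz => DifferentiableAt.mul (by fun_prop) (gg_diff hz))
  set c : ℝ := 1 / √2 with hcdef
  have hc0 : 0 < c := by positivity
  have hc2 : c ^ 2 = 1 / 2 := by rw [hcdef, div_pow, Real.sq_sqrt] <;> norm_num
  have hc : 1 / 2 ≤ c := by nlinarith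
  have hmI : ∀ v : ℝ, HasDerivAt (fun v : ℝ => (v:ℂ) * I) I v := by
    intro v
    simpa using (Complex.ofRealCLM.hasDerivAt (x := v)).mul_const I
  -- left side
  have hL : ∫ t in (-1/2 : ℝ)..(1/2 : ℝ), ((t : ℂ) + I / 2) * gg ((t : ℂ) + I / 2)
      = E (1 / 2 + I / 2) - E (-1 / 2 + I / 2) := by
    have := intervalIntegral.integral_eq_sub_of_hasDerivAt (a := (-1/2:ℝ)) (b := (1/2:ℝ))
      (f := fun t : ℝ => E ((t:ℂ) + I / 2)) (f' := fun t : ℝ => ((t : ℂ) + I / 2) * gg ((t : ℂ) + I / 2))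
      ?_ ?_
    · rw [this]; push_cast; rfl
    · intro t _
      have h1 : HasDerivAt (fun t : ℝ => (t:ℂ) + I / 2) 1 t := by
        simpa using (Complex.ofRealCLM.hasDerivAt (x := t)).add_const (I / 2)
      have := (hE ((t:ℂ) + I / 2) (by simp)).comp t h1
      exact this.congr_deriv (by simp)
    · apply Continuous.intervalIntegrable
      apply Continuous.mul (by fun_prop)
      rw [continuous_iff_continuousAt]
      intro t
      apply ContinuousAt.comp (g := gg) (gg_diff (by simp)).continuousAt
      fun_prop
  -- Fricke
  have hF : Φ (-1 / 2 + I / 2) + Φ (1 / 2 + I / 2) = 2 * Φ (c * I) := by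
    have hd : ∀ z : ℂ, 0 < z.im → HasDerivAt (fun z => Φ (-1 / (2 * z)) + Φ z) 0 z := by
      intro z hz
      have hz0 : z ≠ 0 := by rintro rfl; simp at hz
      have him : 0 < (-1 / (2 * z)).im := by
        rw [show -1 / (2 * z) = ((1/2 : ℝ) : ℂ) * (- z⁻¹) by push_cast; field_simp,
          Complex.im_ofReal_mul, Complex.neg_im, Complex.inv_im]
        have : 0 < Complex.normSq z := Complex.normSq_pos.2 hz0
        have : 0 < z.im / Complex.normSq z := by positivity
        rw [neg_div, neg_neg]; linarith
      have h1 : HasDerivAt (fun z : ℂ => -1 / (2 * z)) (1 / (2 * z ^ 2)) z := by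
        have := (((hasDerivAt_id z).const_mul 2).inv (by simpa using hz0)).const_mul (-1)
        simp only [id, mul_one] at this
        refine (this.congr_deriv ?_).congr_of_eventuallyEq ?_
        · field_simp
        · filter_upwards with x; simp [div_eq_mul_inv]
      have := ((hΦ _ him).comp z h1).add (hΦ z hz)
      refine this.congr_deriv ?_
      rw [gg_S hz]
      field_simp
      ring
    have h := const_of hd (z := -1 / 2 + I / 2) (w := c * I) (by simp) (by simpa using hc0)
    have e1 : -1 / (2 * (-1 / 2 + I / 2)) = 1 / 2 + I / 2 := by
      have : (-1 / 2 + I / 2 : ℂ) ≠ 0 := by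
        intro h
        have := congrArg Complex.im h
        simp at this
      rw [div_eq_iff (mul_ne_zero two_ne_zero this)]
      linear_combination (-1/2) * Complex.I_sq
    have hcc : (c:ℂ) ^ 2 = 1 / 2 := by rw [← Complex.ofReal_pow, hc2]; norm_num
    have e2 : -1 / (2 * ((c:ℂ) * I)) = c * I := by
      have : (c:ℂ) ≠ 0 := by exact_mod_cast hc0.ne'
      field_simp
      rw [hcc, Complex.I_sq]; norm_num
    simp only [e1, e2] at h
    linear_combination h
  -- translation
  obtain ⟨i1, _⟩ := gg_int1 hc
  have hder : ∀ v ∈ Ici c, HasDerivAt (fun v : ℝ => Φ (v * I)) (I * ((1 + 2 * (v:ℂ) ^ 2) * gg (v * I))) v := by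
    intro v hv
    have hv0 : 0 < v := lt_of_lt_of_le hc0 hv
    have := (hΦ (v * I) (by simpa using hv0)).comp v (hmI v)
    refine this.congr_deriv ?_
    rw [mul_pow, Complex.I_sq]
    ring
  have ii := i1.const_mul I
  have hlim := tendsto_limUnder_of_hasDerivAt_of_integrableOn_Ioi (fun v hv => hder v (Ioi_subset_Ici_self hv)) ii
  set m := limUnder atTop (fun v : ℝ => Φ (v * I)) with hm
  have hint := integral_Ioi_of_hasDerivAt_of_tendsto' hder ii hlim
  have hT : ∀ z : ℂ, 0 < z.im →
      HasDerivAt (fun z => Φ (z + 1) + Φ z + 2 * E (z + 1) - 2 * E z) 0 z := by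
    intro z hz
    have h1 : HasDerivAt (fun z : ℂ => z + 1) 1 z := (hasDerivAt_id z).add_const 1
    have hz1 : 0 < (z + 1).im := by simpa using hz
    have := ((((hΦ _ hz1).comp z h1).add (hΦ z hz)).add (((hE _ hz1).comp z h1).const_mul 2)).sub
      ((hE z hz).const_mul 2)
    refine this.congr_deriv ?_
    rw [gg_T]
    ring
  have hC : ∀ v : ℝ, 0 < v → Φ (v * I + 1) + Φ (v * I) + 2 * E (v * I + 1) - 2 * E (v * I)
      = 2 * Φ (c * I) + 2 * (E (1 / 2 + I / 2) - E (-1 / 2 + I / 2)) := by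
    intro v hv
    have h := const_of hT (z := v * I) (w := -1 / 2 + I / 2) (by simpa using hv) (by simp)
    rw [h, show (-1 / 2 + I / 2 + 1 : ℂ) = 1 / 2 + I / 2 by ring]
    linear_combination hF
  have ht1 := horiz hΦ (by
    intro z hz
    rw [norm_mul]
    gcongr
    refine (norm_sub_le _ _).trans ?_
    simp)
  have ht2 := horiz hE (by
    intro z hz
    rw [norm_mul]
    gcongr
    nlinarith [norm_nonneg z, sq_nonneg (‖z‖ - 1/2)])
  have hlim2 : Tendsto (fun v : ℝ => (Φ (v * I + 1) - Φ (v * I)) + 2 * Φ (v * I)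
      + 2 * (E (v * I + 1) - E (v * I))) atTop (𝓝 (0 + 2 * m + 2 * 0)) :=
    (ht1.add (hlim.const_mul 2)).add (ht2.const_mul 2)
  have hlim3 : Tendsto (fun v : ℝ => (Φ (v * I + 1) - Φ (v * I)) + 2 * Φ (v * I)
      + 2 * (E (v * I + 1) - E (v * I))) atTop
      (𝓝 (2 * Φ (c * I) + 2 * (E (1 / 2 + I / 2) - E (-1 / 2 + I / 2)))) := by
    refine tendsto_const_nhds.congr' ?_
    filter_upwards [eventually_gt_atTop (0:ℝ)] with v hv
    rw [← hC v hv]; ring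
  have hfin := tendsto_nhds_unique hlim2 hlim3
  rw [hL, gg_split.2, ← integral_const_mul, hint]
  linear_combination (-1/2) * hfin
end S13

namespace S13
open MeasureTheory Filter Topology Set

noncomputable def aa (k : ℕ) : ℝ := ∏ i ∈ Finset.range k, ((1/2 + i) / (1 + i) : ℝ)

lemma aa_succ (k : ℕ) : aa (k + 1) = aa k * ((1/2 + k) / (1 + k)) := by
  simp only [aa, Finset.prod_range_succ]

lemma aa_zero : aa 0 = 1 := by simp [aa]

lemma aa_pos (k : ℕ) : 0 < aa k := Finset.prod_pos fun i _ => by positivity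

noncomputable def uu (k j : ℕ) : ℝ :=
  (-1) ^ j * (k.choose j) * ∏ i ∈ Finset.range j, ((k + 1/2 + i) / (i + 1/2) : ℝ)

lemma uu_zero (k : ℕ) : uu k 0 = 1 := by simp [uu]

lemma uu_big {k j : ℕ} (h : k < j) : uu k j = 0 := by
  simp [uu, Nat.choose_eq_zero_of_lt h]

lemma uu_r1 (k j : ℕ) : uu k (j + 1) =
    - ((k:ℝ) - j) * (k + 1/2 + j) / ((j + 1) * (j + 1/2)) * uu k j := by
  have h : (k.choose (j + 1) : ℝ) * (j + 1) = k.choose j * ((k:ℝ) - j) := by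
    rcases le_or_gt j k with hj | hj
    · have := Nat.choose_succ_right_eq k j
      rw [← Nat.cast_sub hj]
      exact_mod_cast this
    · rw [Nat.choose_eq_zero_of_lt hj, Nat.choose_eq_zero_of_lt (by omega)]; simp
  have h' : (k.choose (j + 1) : ℝ) = k.choose j * ((k:ℝ) - j) / (j + 1) := by
    rw [← h]; field_simp
  simp only [uu, Finset.prod_range_succ, h', pow_succ]
  field_simp

lemma uu_r3 (k j : ℕ) : uu (k + 1) (j + 1) =
    - ((k:ℝ) + 1) * (k + 1/2 + j) * (k + 3/2 + j) / ((j + 1) * (j + 1/2) * (k + 1/2)) * uu k j := by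
  have h' : ((k+1).choose (j + 1) : ℝ) = (k + 1) * k.choose j / (j + 1) := by
    rw [eq_div_iff (by positivity)]
    exact_mod_cast (Nat.add_one_mul_choose_eq k j).symm
  have hp : ∏ i ∈ Finset.range j, (((k + 1 : ℕ) + 1/2 + i) / (i + 1/2) : ℝ) =
      (∏ i ∈ Finset.range j, ((k + 1/2 + i) / (i + 1/2) : ℝ)) * ((k + 1/2 + j) / (k + 1/2)) := by
    induction j with
    | zero => simp; field_simp
    | succ n ih =>
      rw [Finset.prod_range_succ, ih, Finset.prod_range_succ]
      · push_cast; field_simp; ring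
      · rw [eq_div_iff (by positivity)]
        exact_mod_cast (Nat.add_one_mul_choose_eq k n).symm
  simp only [uu, Finset.prod_range_succ, h', pow_succ] at hp ⊢
  rw [hp]
  push_cast
  field_simp
  ring

lemma tele {f h : ℕ → ℝ} (n : ℕ) (h0 : f 0 = h 0)
    (hs : ∀ j, f (j + 1) = h (j + 1) - h j) : ∑ j ∈ Finset.range (n + 1), f j = h n := by
  induction n with
  | zero => simpa using h0
  | succ n ih => rw [Finset.sum_range_succ, ih, hs]; ring

lemma sum_extend (k : ℕ) (f : ℕ → ℝ) :
    ∑ j ∈ Finset.range (k + 1 + 1), uu k j * f j = ∑ j ∈ Finset.range (k + 1), uu k j * f j := by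
  rw [Finset.sum_range_succ, uu_big (Nat.lt_succ_self k)]; simp

lemma sum3 (k : ℕ) : ∑ j ∈ Finset.range (k + 1), uu k j * aa j ^ 2 = aa k ^ 2 := by
  induction k with
  | zero => simp [uu_zero, aa_zero]
  | succ k ih =>
    have h : ∑ j ∈ Finset.range (k + 1 + 1), ((k + 1) ^ 2 * (uu (k+1) j * aa j ^ 2)
        - (k + 1/2) ^ 2 * (uu k j * aa j ^ 2)) =
        ((k:ℝ) + 1 + (k + 1/2)) / (k + 1/2) * uu k (k + 1) * aa (k+1) ^ 2 * (k + 1/2 + (k+1:ℕ)) * ((k+1:ℕ) + 1/2) := by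
      refine tele (h := fun j : ℕ => ((k:ℝ) + 1 + (k + 1/2)) / (k + 1/2) * uu k j * aa j ^ 2 * (k + 1/2 + j) * (j + 1/2)) (k+1) ?_ ?_
      · simp [uu_zero, aa_zero]; field_simp; ring
      · intro j
        simp only [uu_r3, uu_r1, aa_succ]
        push_cast
        field_simp
        ring
    rw [Finset.sum_sub_distrib, ← Finset.mul_sum, ← Finset.mul_sum, sum_extend k (fun j => aa j ^ 2), ih,
      uu_big (Nat.lt_succ_self k)] at h
    rw [aa_succ]
    have hk : ((k:ℝ) + 1) ≠ 0 := by positivity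
    apply mul_left_cancel₀ (pow_ne_zero 2 hk)
    have : ((k:ℝ) + 1) ^ 2 * (aa k * ((1/2 + k) / (1 + k))) ^ 2 = (k + 1/2) ^ 2 * aa k ^ 2 := by
      field_simp; ring
    rw [this]; linarith

noncomputable def RR (k m : ℕ) : ℝ := ∑ j ∈ Finset.range (k + 1), uu k j * (1 / ((j:ℝ) + m + 1/2))

lemma RR_succ (k m : ℕ) : RR (k + 1) m =
    ((k:ℝ) - m) * (k + 1) / ((k + 1/2) * (k + m + 3/2)) * RR k m := by
  have h : ∑ j ∈ Finset.range (k + 1 + 1), (((k:ℝ) + 1/2) * (k + m + 3/2) * (uu (k+1) j * (1 / ((j:ℝ) + m + 1/2)))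
        - ((k:ℝ) - m) * (k + 1) * (uu k j * (1 / ((j:ℝ) + m + 1/2)))) =
        (2 * (k:ℝ) + 3/2) / (k + 1/2) * uu k (k + 1) * (k + 1/2 + (k+1:ℕ)) := by
    refine tele (h := fun j : ℕ => (2 * (k:ℝ) + 3/2) / (k + 1/2) * uu k j * (k + 1/2 + j)) (k+1) ?_ ?_
    · simp [uu_zero]; field_simp; ring
    · intro j
      simp only [uu_r3, uu_r1]
      push_cast
      field_simp
      ring
  rw [Finset.sum_sub_distrib, ← Finset.mul_sum, ← Finset.mul_sum,
    sum_extend k (fun j => (1 / ((j:ℝ) + m + 1/2))), uu_big (Nat.lt_succ_self k)] at h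
  unfold RR
  generalize ∑ j ∈ Finset.range (k + 1 + 1), uu (k+1) j * (1 / ((j:ℝ) + m + 1/2)) = X at *
  generalize ∑ j ∈ Finset.range (k + 1), uu k j * (1 / ((j:ℝ) + m + 1/2)) = Y at *
  rw [div_mul_eq_mul_div, eq_div_iff (by positivity)]
  linear_combination h

lemma RR_eq (k m : ℕ) : RR k m = 1 / ((m:ℝ) + 1/2) *
    ∏ i ∈ Finset.range k, (((i:ℝ) - m) * (i + 1) / ((i + 1/2) * (i + m + 3/2))) := by
  induction k with
  | zero => simp [RR, uu_zero]
  | succ k ih => rw [RR_succ, ih, Finset.prod_range_succ]; ring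

lemma RR_zero {k m : ℕ} (h : m < k) : RR k m = 0 := by
  rw [RR_eq, Finset.prod_eq_zero (Finset.mem_range.2 h) (by simp)]; simp

lemma prodshift (k : ℕ) (x : ℝ) : (∏ i ∈ Finset.range k, (x + i)) * (x + k) =
    x * ∏ i ∈ Finset.range k, (x + 1 + i) := by
  rw [← Finset.prod_range_succ, Finset.prod_range_succ']
  push_cast
  rw [mul_comm]
  congr 1
  · simp
  · exact Finset.prod_congr rfl fun i _ => by ring

lemma prodneg (k : ℕ) : ∏ i ∈ Finset.range k, ((i:ℝ) - k) = (-1) ^ k * ∏ i ∈ Finset.range k, ((i:ℝ) + 1) := by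
  rw [← Finset.prod_range_reflect, ← Finset.card_range k, ← Finset.prod_const, Finset.card_range,
    ← Finset.prod_mul_distrib]
  refine Finset.prod_congr rfl fun i hi => ?_
  have := Finset.mem_range.1 hi
  rw [Nat.cast_sub (by omega), Nat.cast_sub (by omega)]
  push_cast; ring

lemma RR_diag (k : ℕ) : uu k k * RR k k * aa k ^ 2 = 1 / (2 * k + 1/2) := by
  have h1 : ∏ i ∈ Finset.range k, ((i:ℝ) + 1) ≠ 0 := Finset.prod_ne_zero_iff.2 fun i _ => by positivity
  have h2 : ∏ i ∈ Finset.range k, ((i:ℝ) + 1/2) ≠ 0 := Finset.prod_ne_zero_iff.2 fun i _ => by positivity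
  have h3 : ∏ i ∈ Finset.range k, ((i:ℝ) + k + 3/2) ≠ 0 := Finset.prod_ne_zero_iff.2 fun i _ => by positivity
  have h4 := prodshift k (k + 1/2)
  have h5 : ∏ i ∈ Finset.range k, ((k:ℝ) + 1/2 + 1 + i) = ∏ i ∈ Finset.range k, ((i:ℝ) + k + 3/2) :=
    Finset.prod_congr rfl fun i _ => by ring
  have h6 : aa k = (∏ i ∈ Finset.range k, ((i:ℝ) + 1/2)) / ∏ i ∈ Finset.range k, ((i:ℝ) + 1) := by
    rw [aa, ← Finset.prod_div_distrib]
    exact Finset.prod_congr rfl fun i _ => by rw [add_comm, add_comm (1:ℝ)]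
  rw [h5] at h4
  rw [RR_eq, uu, h6, Finset.prod_div_distrib, Finset.prod_div_distrib, Finset.prod_mul_distrib,
    Finset.prod_mul_distrib, prodneg, Nat.choose_self]
  generalize ∏ i ∈ Finset.range k, ((i:ℝ) + 1) = x at *
  generalize ∏ i ∈ Finset.range k, ((i:ℝ) + 1/2) = y at *
  generalize ∏ i ∈ Finset.range k, ((i:ℝ) + k + 3/2) = z at *
  generalize ∏ i ∈ Finset.range k, ((k:ℝ) + 1/2 + i) = w at *
  have hs : ((-1:ℝ) ^ k) ^ 2 = 1 := by rw [← pow_mul, mul_comm, pow_mul]; simp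
  have hw : w = (k + 1/2) * z / (2 * k + 1/2) := by
    rw [eq_div_iff (by positivity), ← h4]; ring
  rw [hw]
  field_simp
  rw [hs]; norm_num
end S13

namespace S13
open MeasureTheory Filter Topology Set
open scoped unitInterval

lemma int_pow_I (n : ℕ) : ∫ x : I, (x:ℝ) ^ n = 1 / (n + 1) := by
  rw [integral_subtype (s := Icc (0:ℝ) 1) measurableSet_Icc (fun x : ℝ => x ^ n), 
    integral_Icc_eq_integral_Ioc, ← intervalIntegral.integral_of_le zero_le_one, integral_pow]
  simp

noncomputable def pp (k : ℕ) : C(I, ℝ) :=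
  ⟨fun x => ∑ j ∈ Finset.range (k + 1), uu k j * (x:ℝ) ^ (2 * j), by fun_prop⟩

lemma int_I {f : I → ℝ} (hf : Continuous f) : Integrable f := 
  hf.integrable_of_hasCompactSupport (HasCompactSupport.of_compactSpace f)

lemma pp_mom (k m : ℕ) : ∫ x : I, pp k x * (x:ℝ) ^ (2 * m) = RR k m / 2 := by
  simp only [pp, ContinuousMap.coe_mk, Finset.sum_mul]
  rw [integral_finsetSum]
  · rw [RR, Finset.sum_div]
    refine Finset.sum_congr rfl fun j _ => ?_
    simp only [mul_assoc, ← pow_add]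
    rw [integral_const_mul, int_pow_I]
    push_cast
    field_simp
  · intro j _
    apply int_I
    fun_prop

lemma pp_orth {k l : ℕ} (h : l < k) : ∫ x : I, pp k x * pp l x = 0 := by
  have : ∀ x : I, pp k x * pp l x = ∑ j ∈ Finset.range (l + 1), uu l j * (pp k x * (x:ℝ) ^ (2 * j)) := by
    intro x
    conv_lhs => rw [pp, pp]
    simp only [pp, ContinuousMap.coe_mk, Finset.mul_sum]
    refine Finset.sum_congr rfl fun j _ => ?_
    rw [Finset.sum_mul, Finset.sum_mul, Finset.mul_sum]
    refine Finset.sum_congr rfl fun j _ => by ring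
  simp only [this]
  rw [integral_finsetSum]
  · refine Finset.sum_eq_zero fun j hj => ?_
    have := Finset.mem_range.1 hj
    rw [integral_const_mul, pp_mom, RR_zero (by omega)]; simp
  · intro j _
    apply int_I
    fun_prop

lemma pp_norm (k : ℕ) : ∫ x : I, pp k x * pp k x = 1 / ((4 * k + 1) * aa k ^ 2) := by
  have : ∀ x : I, pp k x * pp k x = ∑ j ∈ Finset.range (k + 1), uu k j * (pp k x * (x:ℝ) ^ (2 * j)) := by
    intro x
    conv_lhs => rw [pp]
    simp only [pp, ContinuousMap.coe_mk, Finset.mul_sum]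
    refine Finset.sum_congr rfl fun j _ => ?_
    rw [Finset.sum_mul, Finset.sum_mul, Finset.mul_sum]
    refine Finset.sum_congr rfl fun j _ => by ring
  simp only [this]
  rw [integral_finsetSum]
  · rw [Finset.sum_range_succ, Finset.sum_eq_zero, zero_add, integral_const_mul, pp_mom]
    · have h := RR_diag k
      have := aa_pos k
      rw [eq_div_iff (by positivity)]
      have e : uu k k * (RR k k / 2) * ((4 * k + 1) * aa k ^ 2) = (uu k k * RR k k * aa k ^ 2) * ((4 * k + 1) / 2) := by ring
      rw [e, h]
      field_simp
      ring
    · intro j hj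
      rw [integral_const_mul, pp_mom, RR_zero (Finset.mem_range.1 hj)]; simp
  · intro j _
    apply int_I
    fun_prop

noncomputable def vv (k : ℕ) : C(I, ℝ) := (√(4 * k + 1) * aa k) • pp k

noncomputable def LL : C(I, ℝ) →L[ℝ] Lp ℝ 2 (volume : Measure I) := ContinuousMap.toLp 2 volume ℝ

lemma inner_LL (f g : C(I, ℝ)) : inner ℝ (LL f) (LL g) = ∫ x : I, f x * g x := by
  rw [LL, ContinuousMap.inner_toLp]
  refine integral_congr_ae (ae_of_all _ fun x => ?_)
  simp [mul_comm]

lemma orth : Orthonormal ℝ (fun k => LL (vv k)) := by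
  have key : ∀ k l, inner ℝ (LL (vv k)) (LL (vv l)) = (√(4 * k + 1) * aa k) * (√(4 * l + 1) * aa l) * ∫ x : I, pp k x * pp l x := by
    intro k l
    rw [inner_LL, ← integral_const_mul]
    refine integral_congr_ae (ae_of_all _ fun x => ?_)
    simp [vv]; ring
  rw [orthonormal_iff_ite]
  intro k l
  rw [key]
  split_ifs with h
  · subst h
    rw [pp_norm]
    have := aa_pos k
    have h2 : √(4 * (k:ℝ) + 1) ^ 2 = 4 * k + 1 := Real.sq_sqrt (by positivity)
    field_simp
    rw [h2]
  · rcases lt_or_gt_of_ne h with h | h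
    · have := pp_orth h
      simp_rw [mul_comm (pp k _)]
      rw [this]; simp
    · rw [pp_orth h]; simp

noncomputable def xsq : C(I, ℝ) := ⟨fun x => (x:ℝ) ^ 2, by fun_prop⟩

lemma mono_mem (m : ℕ) : xsq ^ m ∈ Submodule.span ℝ (range vv) := by
  induction m using Nat.strong_induction_on with
  | _ m ih =>
    have huu : uu m m ≠ 0 := by
      intro h
      have := RR_diag m
      rw [h] at this
      simp at this
      have h2 : (0:ℝ) < 2 * m + 2⁻¹ := by positivity
      linarith
    have h1 : pp m = ∑ j ∈ Finset.range m, uu m j • xsq ^ j + uu m m • xsq ^ m := by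
      ext x
      simp only [pp, ContinuousMap.coe_mk, Finset.sum_range_succ, ContinuousMap.add_apply,
        ContinuousMap.sum_apply, ContinuousMap.smul_apply, ContinuousMap.pow_apply, xsq, smul_eq_mul, pow_mul]
    have h2 : xsq ^ m = (uu m m)⁻¹ • (pp m - ∑ j ∈ Finset.range m, uu m j • xsq ^ j) := by
      rw [h1, add_sub_cancel_left, smul_smul, inv_mul_cancel₀ huu, one_smul]
    rw [h2]
    refine Submodule.smul_mem _ _ (Submodule.sub_mem _ ?_ (Submodule.sum_mem _ fun j hj => Submodule.smul_mem _ _ (ih j (Finset.mem_range.1 hj))))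
    have h3 : pp m = (√(4 * m + 1) * aa m)⁻¹ • vv m := by
      have := aa_pos m
      rw [vv, smul_smul, inv_mul_cancel₀ (by positivity), one_smul]
    rw [h3]
    exact Submodule.smul_mem _ _ (Submodule.subset_span ⟨m, rfl⟩)

lemma dense1 : (Submodule.span ℝ (range vv)).topologicalClosure = ⊤ := by
  have h1 : (Algebra.adjoin ℝ {xsq}).topologicalClosure = ⊤ := by
    apply ContinuousMap.subalgebra_topologicalClosure_eq_top_of_separatesPoints
    intro x y hxy
    refine ⟨xsq, ⟨xsq, Algebra.subset_adjoin rfl, rfl⟩, ?_⟩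
    simp only [xsq, ContinuousMap.coe_mk]
    intro h
    apply hxy
    exact Subtype.ext ((sq_eq_sq₀ x.2.1 y.2.1).1 h)
  have h2 : (Algebra.adjoin ℝ {xsq}).toSubmodule ≤ Submodule.span ℝ (range vv) := by
    rw [Algebra.adjoin_eq_span, Submodule.span_le]
    intro f hf
    obtain ⟨n, rfl⟩ := Submonoid.mem_closure_singleton.1 hf
    exact mono_mem n
  rw [eq_top_iff]
  intro f _
  have : f ∈ (Algebra.adjoin ℝ {xsq}).topologicalClosure := by rw [h1]; trivial
  exact closure_mono h2 this

lemma dense2 : (Submodule.span ℝ (range fun k => LL (vv k))).topologicalClosure = ⊤ := by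
  have h1 : (Submodule.span ℝ (range fun k => LL (vv k))) = (Submodule.span ℝ (range vv)).map LL.toLinearMap := by
    rw [Submodule.map_span, ← range_comp]; rfl
  rw [h1]
  have := (ContinuousMap.toLp_denseRange ℝ (volume : Measure I) ℝ (p := 2) (by simp)).topologicalClosure_map_submodule dense1
  exact this

/-- Parseval for even Legendre polynomials -/
lemma parseval {G : I → ℝ} (hG : MemLp G 2) (hm : ∀ n : ℕ, ∫ x : I, (x:ℝ) ^ (2 * n) * G x = π ^ 2 / 4 * aa n ^ 2) :
    HasSum (fun k : ℕ => (4 * (k:ℝ) + 1) * aa k ^ 6 * (π ^ 4 / 16)) (∫ x : I, G x ^ 2) := by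
  let b := HilbertBasis.mk orth dense2.ge
  have h := b.hasSum_inner_mul_inner (hG.toLp G) (hG.toLp G)
  have hin : ∀ k, inner ℝ (LL (vv k)) (hG.toLp G) = √(4 * k + 1) * aa k * (π ^ 2 / 4 * aa k ^ 2) := by
    intro k
    rw [L2.inner_def]
    have h1 : ∫ x : I, inner ℝ (LL (vv k) x) (hG.toLp G x) = ∫ x : I, (√(4 * k + 1) * aa k) * ∑ j ∈ Finset.range (k + 1), uu k j * ((x:ℝ) ^ (2 * j) * G x) := by
      refine integral_congr_ae ?_
      filter_upwards [ContinuousMap.coeFn_toLp (p := 2) (𝕜 := ℝ) (volume : Measure I) (vv k), hG.coeFn_toLp] with x h1 h2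
      rw [h2]
      change inner ℝ ((ContinuousMap.toLp 2 volume ℝ (vv k) : Lp ℝ 2 (volume : Measure I)) x) _ = _
      rw [h1]
      simp only [vv, pp, ContinuousMap.smul_apply, ContinuousMap.coe_mk, smul_eq_mul, RCLike.inner_apply, conj_trivial]
      rw [Finset.mul_sum, Finset.mul_sum, Finset.mul_sum]
      refine Finset.sum_congr rfl fun j _ => by ring
    rw [h1, integral_const_mul, integral_finsetSum]
    · simp only [integral_const_mul, hm]
      rw [← sum3 k]
      congr 1
      rw [Finset.mul_sum]
      refine Finset.sum_congr rfl fun j _ => by ring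
    · intro j _
      apply Integrable.const_mul
      have hb : MemLp (fun x : I => (x:ℝ) ^ (2 * j)) 2 := 
        Continuous.memLp_of_hasCompactSupport (by fun_prop) (HasCompactSupport.of_compactSpace _)
      exact hb.integrable_mul hG
  have hb : ∀ k, b k = LL (vv k) := by
    intro k
    rw [HilbertBasis.coe_mk]
  have hl : inner ℝ (hG.toLp G) (hG.toLp G) = ∫ x : I, G x ^ 2 := by
    rw [L2.inner_def]
    refine integral_congr_ae ?_
    filter_upwards [hG.coeFn_toLp] with x h2
    rw [h2]
    simp [sq]
  rw [hl] at h
  have e : (fun k : ℕ => (4 * (k:ℝ) + 1) * aa k ^ 6 * (π ^ 4 / 16)) =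
      fun i => inner ℝ (MemLp.toLp G hG) (b i) * inner ℝ (b i) (MemLp.toLp G hG) := by
    funext k
    rw [real_inner_comm, hb, hin]
    have h2 : √(4 * (k:ℝ) + 1) ^ 2 = 4 * k + 1 := Real.sq_sqrt (by positivity)
    nth_rw 1 [← h2]; ring
  rw [e]
  exact h
end S13

namespace S13
open MeasureTheory Filter Topology Set
open scoped ENNReal

noncomputable def JI (a b : ℝ) : ℝ≥0∞ :=
  ∫⁻ s in Ioo b a, ENNReal.ofReal (1 / √((a ^ 2 - s ^ 2) * (s ^ 2 - b ^ 2)))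

lemma JI_scale {a b c : ℝ} (hc : 0 < c) : JI a b = ENNReal.ofReal c * JI (c * a) (c * b) := by
  have him : (fun s => c * s) '' Ioo b a = Ioo (c * b) (c * a) := Set.image_mul_left_Ioo hc b a
  unfold JI
  rw [← him, lintegral_image_eq_lintegral_abs_deriv_mul measurableSet_Ioo
    (f' := fun _ => c) (fun x _ => by simpa using ((hasDerivAt_id x).const_mul c).hasDerivWithinAt)
    (fun x _ y _ h => mul_left_cancel₀ hc.ne' h), ← lintegral_const_mul' _ _ ENNReal.ofReal_ne_top]
  refine setLIntegral_congr_fun measurableSet_Ioo fun s hs => ?_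
  rw [← ENNReal.ofReal_mul (abs_nonneg _), ← ENNReal.ofReal_mul hc.le]
  congr 1
  rw [show ((c * a) ^ 2 - (c * s) ^ 2) * ((c * s) ^ 2 - (c * b) ^ 2) =
    (c ^ 2) ^ 2 * ((a ^ 2 - s ^ 2) * (s ^ 2 - b ^ 2)) by ring, Real.sqrt_mul (x := (c ^ 2) ^ 2) (by positivity),
    Real.sqrt_sq (by positivity), abs_of_pos hc]
  field_simp

lemma landen_half {a b : ℝ} (hb : 0 < b) (hab : b < a) {S : Set ℝ} (hS : MeasurableSet S)
    (hSs : S ⊆ Ioo b a) (hne : ∀ s ∈ S, s ^ 2 ≠ a * b)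
    (hinj : ∀ s ∈ S, ∀ t ∈ S, s * t ≠ a * b)
    (him : (fun s => (s + a * b / s) / 2) '' S = Ioo (√(a * b)) ((a + b) / 2)) :
    JI ((a + b) / 2) (√(a * b)) = 
      2 * ∫⁻ s in S, ENNReal.ofReal (1 / √((a ^ 2 - s ^ 2) * (s ^ 2 - b ^ 2))) := by
  have hpos : ∀ s ∈ S, 0 < s := fun s hs => hb.trans (hSs hs).1
  unfold JI
  rw [← him, lintegral_image_eq_lintegral_abs_deriv_mul hS
    (f' := fun s => (1 - a * b / s ^ 2) / 2) ?_ ?_, ← lintegral_const_mul' _ _ (by simp)]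
  · refine setLIntegral_congr_fun hS fun s hs => ?_
    have h0 := hpos s hs
    obtain ⟨h1, h2⟩ := hSs hs
    have h3 : s - a * b / s ≠ 0 := by
      have := hne s hs
      intro h
      apply this
      field_simp at h
      linarith
    have hP : 0 < (a ^ 2 - s ^ 2) * (s ^ 2 - b ^ 2) := mul_pos (by nlinarith) (by nlinarith)
    rw [show (2 : ℝ≥0∞) = ENNReal.ofReal 2 by simp, ← ENNReal.ofReal_mul (abs_nonneg _), ← ENNReal.ofReal_mul (by norm_num)]
    congr 1
    have e1 : (((a + b) / 2) ^ 2 - ((s + a * b / s) / 2) ^ 2) * (((s + a * b / s) / 2) ^ 2 - √(a * b) ^ 2)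
      = ((s - a * b / s) / (4 * s)) ^ 2 * ((a ^ 2 - s ^ 2) * (s ^ 2 - b ^ 2)) := by
      rw [Real.sq_sqrt (mul_pos (hb.trans hab) hb).le]
      field_simp
      ring
    rw [e1, Real.sqrt_mul (sq_nonneg _), Real.sqrt_sq_eq_abs,
      show (1 - a * b / s ^ 2) / 2 = (s - a * b / s) / (4 * s) * 2 by field_simp; ring, abs_mul]
    have h4 : |(s - a * b / s) / (4 * s)| ≠ 0 := abs_ne_zero.2 (div_ne_zero h3 (by positivity))
    have h5 := (Real.sqrt_pos.2 hP).ne'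
    rw [abs_of_pos (by norm_num : (0:ℝ) < 2)]
    generalize |(s - a * b / s) / (4 * s)| = y at *
    field_simp
  · intro s hs
    have h0 := hpos s hs
    have h := (((hasDerivAt_id s).add ((hasDerivAt_inv h0.ne').const_mul (a * b))).div_const 2)
    refine (h.congr_deriv ?_).hasDerivWithinAt
    simp [div_eq_mul_inv, sub_eq_add_neg]
  · intro s hs t ht h
    have h0 := hpos s hs
    have h0' := hpos t ht
    simp only at h
    have : (s - t) * (s * t - a * b) = 0 := by
      field_simp at h
      linear_combination h
    rcases mul_eq_zero.1 this with h | h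
    · linarith
    · exact absurd (by linarith) (hinj s hs t ht)

lemma landen {a b : ℝ} (hb : 0 < b) (hab : b < a) : JI a b = JI ((a + b) / 2) (√(a * b)) := by
  have ha := hb.trans hab
  set g := √(a * b) with hg
  have hg2 : g ^ 2 = a * b := Real.sq_sqrt (by positivity)
  have hg0 : 0 < g := Real.sqrt_pos.2 (by positivity)
  have hbg : b < g := by nlinarith
  have hga : g < a := by nlinarith
  have hfac : ∀ s, 0 < s → s ≠ g → g < (s + a * b / s) / 2 := by
    intro s hs hsg
    have : 0 < (s - g) ^ 2 := by have := sub_ne_zero.2 hsg; positivity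
    rw [lt_div_iff₀ (by norm_num), ← hg2]
    rw [show s + g ^ 2 / s = (s ^ 2 + g ^ 2) / s by field_simp, lt_div_iff₀ hs]
    nlinarith
  have hfac2 : ∀ s, b < s → s < a → (s + a * b / s) / 2 < (a + b) / 2 := by
    intro s h1 h2
    have hs : 0 < s := hb.trans h1
    apply div_lt_div_of_pos_right _ (by norm_num)
    rw [show s + a * b / s = (s ^ 2 + a * b) / s by field_simp, div_lt_iff₀ hs]
    nlinarith
  have inv : ∀ u ∈ Ioo g ((a + b) / 2), ∃ r, 0 < r ∧ r < a - u ∧ r < u - b ∧ (u + r) * (u - r) = a * b := by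
    intro u ⟨h1, h2⟩
    have h3 : 0 < u ^ 2 - a * b := by rw [← hg2]; nlinarith
    refine ⟨√(u ^ 2 - a * b), Real.sqrt_pos.2 h3, ?_, ?_, ?_⟩
    · rw [Real.sqrt_lt' (by linarith)]; nlinarith
    · rw [Real.sqrt_lt' (by linarith)]; nlinarith
    · have := Real.sq_sqrt h3.le
      linear_combination -this
  have L1 := landen_half hb hab (S := Ioo b g) measurableSet_Ioo (Ioo_subset_Ioo_right hga.le)
    (fun s hs => by rw [← hg2]; have := hs.1; have := hs.2; nlinarith)
    (fun s hs t ht => by rw [← hg2]; have := hs.1; have := hs.2; have := ht.1; have := ht.2; nlinarith)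
    (by
      apply Subset.antisymm
      · rintro _ ⟨s, hs, rfl⟩
        exact ⟨hfac s (hb.trans hs.1) hs.2.ne, hfac2 s hs.1 (hs.2.trans hga)⟩
      · intro u hu
        obtain ⟨r, h0, h1, h2, h3⟩ := inv u hu
        refine ⟨u - r, ⟨by linarith, ?_⟩, ?_⟩
        · have := hu.1
          by_contra hcon
          rw [← hg2] at h3
          nlinarith
        · have : u - r ≠ 0 := by linarith
          simp only
          rw [← h3]; field_simp; ring)
  have L2 := landen_half hb hab (S := Ioo g a) measurableSet_Ioo (Ioo_subset_Ioo_left hbg.le)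
    (fun s hs => by rw [← hg2]; have := hs.1; have := hs.2; nlinarith)
    (fun s hs t ht => by rw [← hg2]; have := hs.1; have := hs.2; have := ht.1; have := ht.2; nlinarith)
    (by
      apply Subset.antisymm
      · rintro _ ⟨s, hs, rfl⟩
        exact ⟨hfac s (hg0.trans hs.1) hs.1.ne', hfac2 s (hbg.trans hs.1) hs.2⟩
      · intro u hu
        obtain ⟨r, h0, h1, h2, h3⟩ := inv u hu
        have := hu.1
        refine ⟨u + r, ⟨by linarith, by linarith⟩, ?_⟩
        · have : u + r ≠ 0 := by linarith
          simp only
          rw [← h3]; field_simp; ring)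
  have hsplit : JI a b = (∫⁻ s in Ioo b g, ENNReal.ofReal (1 / √((a ^ 2 - s ^ 2) * (s ^ 2 - b ^ 2)))) +
      ∫⁻ s in Ioo g a, ENNReal.ofReal (1 / √((a ^ 2 - s ^ 2) * (s ^ 2 - b ^ 2))) := by
    unfold JI
    rw [← Ioc_union_Ioo_eq_Ioo hbg.le hga, lintegral_union measurableSet_Ioo, setLIntegral_congr (Ioo_ae_eq_Ioc (a := b) (b := g))]
    rw [Set.disjoint_left]
    intro x hx hx'
    exact absurd hx.2 (not_le.2 hx'.1)
  have : 2 * JI a b = 2 * JI ((a + b) / 2) g := by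
    rw [hsplit, mul_add, ← L1, ← L2, two_mul]
  exact (ENNReal.mul_right_inj (by simp) (by simp)).1 this

lemma image_sin : Real.sin '' Ioo (-(π/2)) (π/2) = Ioo (-1) 1 := by
  apply Subset.antisymm
  · rintro _ ⟨x, hx, rfl⟩
    constructor
    · have := Real.strictMonoOn_sin ⟨le_rfl, by linarith [Real.pi_pos]⟩ ⟨hx.1.le, hx.2.le⟩ hx.1
      simpa using this
    · have := Real.strictMonoOn_sin ⟨hx.1.le, hx.2.le⟩ ⟨by linarith [Real.pi_pos], le_rfl⟩ hx.2
      simpa using this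
  · intro y hy
    exact ⟨Real.arcsin y, ⟨Real.neg_pi_div_two_lt_arcsin.2 hy.1, Real.arcsin_lt_pi_div_two.2 hy.2⟩,
      Real.sin_arcsin hy.1.le hy.2.le⟩

lemma image_sin' : Real.sin '' Ioo 0 (π/2) = Ioo 0 1 := by
  apply Subset.antisymm
  · rintro _ ⟨x, hx, rfl⟩
    constructor
    · exact Real.sin_pos_of_pos_of_lt_pi hx.1 (by linarith [Real.pi_pos, hx.2])
    · have := Real.strictMonoOn_sin ⟨by linarith [Real.pi_pos, hx.1], hx.2.le⟩ ⟨by linarith [Real.pi_pos], le_rfl⟩ hx.2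
      simpa using this
  · intro y hy
    exact ⟨Real.arcsin y, ⟨Real.arcsin_pos.2 hy.1, Real.arcsin_lt_pi_div_two.2 hy.2⟩,
      Real.sin_arcsin (by linarith [hy.1]) hy.2.le⟩

lemma cheb {a b : ℝ} (hab : b < a) :
    ∫⁻ s in Ioo b a, ENNReal.ofReal (1 / √((a - s) * (s - b))) = ENNReal.ofReal π := by
  set r := (a - b) / 2 with hr
  have hr0 : 0 < r := by rw [hr]; linarith
  have him : (fun x => r * Real.sin x + (a + b) / 2) '' Ioo (-(π/2)) (π/2) = Ioo b a := by
    rw [show (fun x => r * Real.sin x + (a + b) / 2) = (fun x => x + (a+b)/2) ∘ (fun x => r * x) ∘ Real.sin from rfl,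
      image_comp, image_comp, image_sin, Set.image_mul_left_Ioo hr0, Set.image_add_const_Ioo]
    congr 1 <;> rw [hr] <;> ring
  rw [← him, lintegral_image_eq_lintegral_abs_deriv_mul measurableSet_Ioo
    (f' := fun x => r * Real.cos x) (fun x _ => (((Real.hasDerivAt_sin x).const_mul r).add_const _).hasDerivWithinAt)]
  · rw [setLIntegral_congr_fun (g := fun _ => 1) measurableSet_Ioo, setLIntegral_one, Real.volume_Ioo]
    · congr 1; ring
    intro x hx
    have hc : 0 < Real.cos x := Real.cos_pos_of_mem_Ioo hx
    simp only
    rw [← ENNReal.ofReal_mul (abs_nonneg _), ← ENNReal.ofReal_one]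
    congr 1
    have : (a - (r * Real.sin x + (a + b) / 2)) * (r * Real.sin x + (a + b) / 2 - b) = (r * Real.cos x) ^ 2 := by
      have h1 : a = (a + b) / 2 + r := by rw [hr]; ring
      have h2 : b = (a + b) / 2 - r := by rw [hr]; ring
      have h3 := Real.sin_sq_add_cos_sq x
      have h4 : (a + b) / 2 = a - r := by linarith
      have h5 : b = a - 2 * r := by linarith
      rw [h4, h5]
      linear_combination (-r ^ 2) * h3
    rw [this, Real.sqrt_sq (by positivity), abs_of_pos (by positivity)]
    field_simp
  · intro x hx y hy h
    simp only at h
    have h' : Real.sin x = Real.sin y := mul_left_cancel₀ hr0.ne' (by linarith)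
    exact Real.injOn_sin ⟨hx.1.le, hx.2.le⟩ ⟨hy.1.le, hy.2.le⟩ h'

lemma JI_le {a b : ℝ} (hb : 0 < b) (hab : b < a) : JI a b ≤ ENNReal.ofReal (π / (2 * b)) := by
  have : ENNReal.ofReal (π / (2 * b)) = ENNReal.ofReal (1 / (2 * b)) * ENNReal.ofReal π := by
    rw [← ENNReal.ofReal_mul (by positivity)]; congr 1; field_simp
  rw [this, ← cheb hab, ← lintegral_const_mul' _ _ ENNReal.ofReal_ne_top]
  refine setLIntegral_mono' measurableSet_Ioo fun s hs => ?_
  rw [← ENNReal.ofReal_mul (by positivity)]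
  apply ENNReal.ofReal_le_ofReal
  obtain ⟨h1, h2⟩ := hs
  have hp : 0 < (a - s) * (s - b) := mul_pos (by linarith) (by linarith)
  rw [← one_div_mul_one_div_rev, one_div_mul_one_div_rev, one_div_mul_one_div_rev]
  apply one_div_le_one_div_of_le (mul_pos (Real.sqrt_pos.2 hp) (by positivity))
  apply Real.le_sqrt_of_sq_le
  rw [mul_pow, Real.sq_sqrt hp.le]
  have : (a ^ 2 - s ^ 2) * (s ^ 2 - b ^ 2) = (a - s) * (s - b) * ((a + s) * (s + b)) := by ring
  rw [this]
  apply mul_le_mul_of_nonneg_left _ hp.le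
  nlinarith

lemma le_JI {a b : ℝ} (hb : 0 < b) (hab : b < a) : ENNReal.ofReal (π / (2 * a)) ≤ JI a b := by
  have ha := hb.trans hab
  have : ENNReal.ofReal (π / (2 * a)) = ENNReal.ofReal (1 / (2 * a)) * ENNReal.ofReal π := by
    rw [← ENNReal.ofReal_mul (by positivity)]; congr 1; field_simp
  rw [this, ← cheb hab, ← lintegral_const_mul' _ _ ENNReal.ofReal_ne_top]
  refine setLIntegral_mono' measurableSet_Ioo fun s hs => ?_
  rw [← ENNReal.ofReal_mul (by positivity)]
  apply ENNReal.ofReal_le_ofReal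
  obtain ⟨h1, h2⟩ := hs
  have hp : 0 < (a - s) * (s - b) := mul_pos (by linarith) (by linarith)
  have e : (a ^ 2 - s ^ 2) * (s ^ 2 - b ^ 2) = (a - s) * (s - b) * ((a + s) * (s + b)) := by ring
  have hq : 0 < (a + s) * (s + b) := mul_pos (by linarith) (by linarith)
  rw [one_div_mul_one_div_rev]
  apply one_div_le_one_div_of_le
  · rw [e]; exact Real.sqrt_pos.2 (mul_pos hp hq)
  apply Real.sqrt_le_iff.2 ⟨by positivity, ?_⟩
  rw [mul_pow, Real.sq_sqrt hp.le, e]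
  apply mul_le_mul_of_nonneg_left _ hp.le
  nlinarith

lemma JI_agm {a b : ℕ → ℝ} (hb : ∀ n, 0 < b n) (hab : ∀ n, b n < a n)
    (ha1 : ∀ n, a (n + 1) = (a n + b n) / 2) (hb1 : ∀ n, b (n + 1) = √(a n * b n))
    (hla : Tendsto a atTop (𝓝 1)) (hlb : Tendsto b atTop (𝓝 1)) :
    JI (a 0) (b 0) = ENNReal.ofReal (π / 2) := by
  have hc : ∀ n, JI (a n) (b n) = JI (a 0) (b 0) := by
    intro n
    induction n with
    | zero => rfl
    | succ n ih => rw [ha1, hb1, ← landen (hb n) (hab n), ih]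
  apply le_antisymm
  · refine ge_of_tendsto (f := fun n => ENNReal.ofReal (π / (2 * b n))) (x := atTop) ?_ (Eventually.of_forall fun n => by rw [← hc n]; exact JI_le (hb n) (hab n))
    apply ENNReal.tendsto_ofReal
    have := (tendsto_const_nhds (x := π)).div (hlb.const_mul 2) (by norm_num)
    rw [mul_one] at this
    exact this
  · refine le_of_tendsto (f := fun n => ENNReal.ofReal (π / (2 * a n))) (x := atTop) ?_ (Eventually.of_forall fun n => by rw [← hc n]; exact le_JI (hb n) (hab n))
    apply ENNReal.tendsto_ofReal
    have := (tendsto_const_nhds (x := π)).div (hla.const_mul 2) (by norm_num)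
    rw [mul_one] at this
    exact this
end S13

namespace S13
open MeasureTheory Filter Topology Set
open scoped ENNReal

noncomputable def WW (n : ℕ) : ℝ≥0∞ := ∫⁻ x in Ioo 0 (π/2), ENNReal.ofReal (Real.sin x ^ (2 * n))

lemma WW_eq (n : ℕ) : WW n = ENNReal.ofReal (π / 2 * aa n) := by
  have hpi := Real.pi_pos
  have hc : Continuous fun x => Real.sin x ^ (2 * n) := by fun_prop
  have hW : WW n = ENNReal.ofReal (∫ x in (0:ℝ)..(π/2), Real.sin x ^ (2 * n)) := by
    unfold WW
    rw [intervalIntegral.integral_of_le (by positivity), integral_Ioc_eq_integral_Ioo, ofReal_integral_eq_lintegral_ofReal]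
    · exact (hc.integrableOn_Icc (a := 0) (b := π/2)).mono_set Ioo_subset_Icc_self
    · exact ae_of_all _ fun x => by simp only [pow_mul]; positivity
  rw [hW]
  congr 1
  have h1 := integral_sin_pow_even n
  have h2 : ∫ x in (0:ℝ)..(π/2), Real.sin x ^ (2 * n) = ∫ x in (π/2)..π, Real.sin x ^ (2 * n) := by
    have := intervalIntegral.integral_comp_sub_left (a := 0) (b := π/2) (fun x => Real.sin x ^ (2 * n)) π
    simp only [Real.sin_pi_sub] at this
    rw [this]
    congr 1 <;> ring
  have h3 := intervalIntegral.integral_add_adjacent_intervals (hc.intervalIntegrable (μ := volume) 0 (π/2)) (hc.intervalIntegrable (π/2) π)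
  rw [← h2, h1] at h3
  have h4 : ∏ i ∈ Finset.range n, ((2 * (i:ℝ) + 1) / (2 * i + 2)) = aa n := by
    refine Finset.prod_congr rfl fun i _ => ?_
    field_simp
    ring
  rw [h4] at h3
  linarith

lemma inner_mom {s : ℝ} (hs : 0 < s) (n : ℕ) :
    ∫⁻ x in Ioo 0 s, ENNReal.ofReal (x ^ (2 * n) * (1 / √(s ^ 2 - x ^ 2))) = ENNReal.ofReal (s ^ (2 * n)) * WW n := by
  have him : (fun x => s * Real.sin x) '' Ioo 0 (π/2) = Ioo 0 s := by
    rw [show (fun x => s * Real.sin x) = (fun x => s * x) ∘ Real.sin from rfl, image_comp, image_sin',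
      Set.image_mul_left_Ioo hs]
    simp
  rw [← him, lintegral_image_eq_lintegral_abs_deriv_mul measurableSet_Ioo
    (f' := fun x => s * Real.cos x) (fun x _ => (((Real.hasDerivAt_sin x).const_mul s)).hasDerivWithinAt),
    WW, ← lintegral_const_mul' _ _ ENNReal.ofReal_ne_top]
  · refine setLIntegral_congr_fun measurableSet_Ioo fun x hx => ?_
    have hc : 0 < Real.cos x := Real.cos_pos_of_mem_Ioo ⟨by linarith [hx.1, Real.pi_pos], hx.2⟩
    rw [← ENNReal.ofReal_mul (abs_nonneg _), ← ENNReal.ofReal_mul (by positivity)]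
    congr 1
    have : s ^ 2 - (s * Real.sin x) ^ 2 = (s * Real.cos x) ^ 2 := by
      linear_combination (-s ^ 2) * Real.sin_sq_add_cos_sq x
    rw [this, Real.sqrt_sq (by positivity), abs_of_pos (by positivity), mul_pow]
    field_simp
  · intro x hx y hy h
    simp only at h
    have h' : Real.sin x = Real.sin y := mul_left_cancel₀ hs.ne' (by linarith)
    exact Real.injOn_sin ⟨by linarith [hx.1, Real.pi_pos], hx.2.le⟩ ⟨by linarith [hy.1, Real.pi_pos], hy.2.le⟩ h'

noncomputable def kern (x s : ℝ) : ℝ≥0∞ :=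
  if x < s then ENNReal.ofReal (1 / √((1 ^ 2 - s ^ 2) * (s ^ 2 - x ^ 2))) else 0

lemma kern_meas : Measurable (Function.uncurry kern) := by
  unfold kern Function.uncurry
  apply Measurable.ite
  · exact measurableSet_lt measurable_fst measurable_snd
  · fun_prop
  · fun_prop

lemma JI_kern {x : ℝ} (hx : 0 ≤ x) : JI 1 x = ∫⁻ s in Ioo 0 1, kern x s := by
  unfold JI
  rw [← lintegral_indicator measurableSet_Ioo, ← lintegral_indicator measurableSet_Ioo]
  refine lintegral_congr fun s => ?_
  unfold kern
  by_cases h : x < s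
  · by_cases h2 : s < 1
    · rw [indicator_of_mem (show s ∈ Ioo x 1 from ⟨h, h2⟩), indicator_of_mem (show s ∈ Ioo 0 1 from ⟨by linarith, h2⟩), if_pos h]
    · rw [indicator_of_notMem (fun h => h2 h.2), indicator_of_notMem (fun h => h2 h.2)]
  · rw [indicator_of_notMem (fun h' => h h'.1)]
    by_cases h2 : s ∈ Ioo (0:ℝ) 1
    · rw [indicator_of_mem h2, if_neg h]
    · rw [indicator_of_notMem h2]

lemma mom (n : ℕ) : ∫⁻ x in Ioo 0 1, ENNReal.ofReal (x ^ (2 * n)) * JI 1 x = ENNReal.ofReal (π ^ 2 / 4 * aa n ^ 2) := by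
  have h1 : ∫⁻ x in Ioo (0:ℝ) 1, ENNReal.ofReal (x ^ (2 * n)) * JI 1 x =
      ∫⁻ x in Ioo (0:ℝ) 1, ∫⁻ s in Ioo (0:ℝ) 1, ENNReal.ofReal (x ^ (2 * n)) * kern x s := by
    refine setLIntegral_congr_fun measurableSet_Ioo fun x hx => ?_
    rw [JI_kern hx.1.le, lintegral_const_mul' _ _ ENNReal.ofReal_ne_top]
  rw [h1, lintegral_lintegral_swap]
  · have h2 : ∀ s ∈ Ioo (0:ℝ) 1, ∫⁻ x in Ioo (0:ℝ) 1, ENNReal.ofReal (x ^ (2 * n)) * kern x s =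
        ENNReal.ofReal (s ^ (2 * n) * (1 / √(1 ^ 2 - s ^ 2))) * WW n := by
      intro s hs
      have hs1 : 0 < 1 ^ 2 - s ^ 2 := by nlinarith [hs.1, hs.2]
      rw [mul_comm (s ^ (2 * n)), ENNReal.ofReal_mul (by positivity), mul_assoc, ← inner_mom hs.1, ← lintegral_const_mul' _ _ ENNReal.ofReal_ne_top,
        ← lintegral_indicator measurableSet_Ioo, ← lintegral_indicator measurableSet_Ioo]
      refine lintegral_congr fun x => ?_
      unfold kern
      by_cases h : x ∈ Ioo 0 s
      · rw [indicator_of_mem h, indicator_of_mem (show x ∈ Ioo 0 1 from ⟨h.1, h.2.trans hs.2⟩), if_pos h.2,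
          ← ENNReal.ofReal_mul (by have := h.1; positivity), ← ENNReal.ofReal_mul (by positivity)]
        congr 1
        rw [Real.sqrt_mul hs1.le]
        field_simp
      · rw [indicator_of_notMem h]
        by_cases h2 : x ∈ Ioo (0:ℝ) 1
        · rw [indicator_of_mem h2, if_neg (fun h3 => h ⟨h2.1, h3⟩), mul_zero]
        · rw [indicator_of_notMem h2]
    rw [setLIntegral_congr_fun measurableSet_Ioo h2, lintegral_mul_const']
    · rw [inner_mom one_pos, WW_eq, one_pow, ENNReal.ofReal_one, one_mul, ← ENNReal.ofReal_mul]
      · congr 1; ring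
      · have := aa_pos n
        have := Real.pi_pos
        positivity
    · rw [WW_eq]; exact ENNReal.ofReal_ne_top
  · apply Measurable.aemeasurable
    have := kern_meas
    unfold Function.uncurry at this ⊢
    fun_prop
end S13

namespace S13
open MeasureTheory Filter Topology Set

noncomputable def th (q : ℝ) : ℝ := ∑' n : ℤ, q ^ (n.natAbs ^ 2)

lemma sumN {q : ℝ} (hq : |q| < 1) : Summable fun n : ℤ => ‖q ^ (n.natAbs ^ 2)‖ := by
  have h : Summable fun n : ℕ => |q| ^ n := summable_geometric_of_lt_one (abs_nonneg q) hq
  have h2 : Summable fun n : ℕ => |q| ^ (n ^ 2) :=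
    Summable.of_nonneg_of_le (fun n => by positivity)
      (fun n => pow_le_pow_of_le_one (abs_nonneg q) hq.le (Nat.le_self_pow (by norm_num) n)) h
  apply Summable.of_nat_of_neg <;> simpa using h2

lemma sumT {q : ℝ} (hq : |q| < 1) : Summable fun n : ℤ => q ^ (n.natAbs ^ 2) := (sumN hq).of_norm

noncomputable def eps (n : ℤ) : ℝ := (-1) ^ n.natAbs

lemma eps_eq (n : ℤ) : eps n = if Even n then 1 else -1 := by
  unfold eps
  split_ifs with h
  · exact (Int.natAbs_even.2 h).neg_one_pow
  · exact (Int.natAbs_odd.2 (Int.not_even_iff_odd.1 h)).neg_one_pow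

lemma neg_pow_eps (q : ℝ) (n : ℤ) : (-q) ^ (n.natAbs ^ 2) = eps n * q ^ (n.natAbs ^ 2) := by
  rw [neg_pow, eps]
  congr 1
  rcases Nat.even_or_odd n.natAbs with h | h
  · rw [h.neg_one_pow, (h.pow_of_ne_zero (by norm_num)).neg_one_pow]
  · rw [h.neg_one_pow, (h.pow).neg_one_pow]

lemma reindex (F : ℤ × ℤ → ℝ) :
    ∑' p : ℤ × ℤ, F p * (1 + eps p.1 * eps p.2) = 2 * ∑' p : ℤ × ℤ, F (p.1 + p.2, p.1 - p.2) := by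
  have hinj : Function.Injective (fun p : ℤ × ℤ => (p.1 + p.2, p.1 - p.2)) := by
    rintro ⟨a, b⟩ ⟨c, d⟩ h
    simp only [Prod.mk.injEq] at h ⊢
    omega
  rw [← hinj.tsum_eq, ← tsum_mul_left]
  · refine tsum_congr fun p => ?_
    have : eps (p.1 + p.2) * eps (p.1 - p.2) = 1 := by
      simp only [eps_eq, Int.even_add, Int.even_sub]
      split_ifs <;> norm_num
    simp only [this]; ring
  · rintro ⟨m, n⟩ h
    rw [Function.mem_support] at h
    have h2 : Even (m + n) := by
      by_contra hcon
      apply h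
      have : eps m * eps n = -1 := by
        rw [Int.even_add] at hcon
        simp only [eps_eq]
        split_ifs <;> simp_all
      simp [this]
    obtain ⟨c, hc⟩ := h2
    exact ⟨(c, m - c), by simp only [Prod.mk.injEq]; omega⟩

lemma th_mul {q r : ℝ} (hq : |q| < 1) (hr : |r| < 1) :
    th q * th r = ∑' p : ℤ × ℤ, q ^ (p.1.natAbs ^ 2) * r ^ (p.2.natAbs ^ 2) :=
  tsum_mul_tsum_of_summable_norm (f := fun n : ℤ => q ^ (n.natAbs ^ 2)) (g := fun n : ℤ => r ^ (n.natAbs ^ 2)) (sumN hq) (sumN hr)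

lemma sumP {q r : ℝ} (hq : |q| < 1) (hr : |r| < 1) :
    Summable fun p : ℤ × ℤ => q ^ (p.1.natAbs ^ 2) * r ^ (p.2.natAbs ^ 2) :=
  summable_mul_of_summable_norm (f := fun n : ℤ => q ^ (n.natAbs ^ 2)) (g := fun n : ℤ => r ^ (n.natAbs ^ 2)) (sumN hq) (sumN hr)

lemma expo (a b : ℤ) : (a + b).natAbs ^ 2 + (a - b).natAbs ^ 2 = 2 * (a.natAbs ^ 2) + 2 * b.natAbs ^ 2 := by
  zify
  simp only [sq_abs]
  ring

lemma sq_lt {q : ℝ} (hq : |q| < 1) : |q ^ 2| < 1 := by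
  rw [abs_pow]; exact pow_lt_one₀ (abs_nonneg q) hq (by norm_num)

lemma th_i {q : ℝ} (hq : |q| < 1) : th q ^ 2 + th (-q) ^ 2 = 2 * th (q ^ 2) ^ 2 := by
  have hq' : |(-q)| < 1 := by rwa [abs_neg]
  rw [sq, sq, sq, th_mul hq hq, th_mul hq' hq', th_mul (sq_lt hq) (sq_lt hq), ← (sumP hq hq).tsum_add (sumP hq' hq')]
  have h := reindex (fun p => q ^ (p.1.natAbs ^ 2) * q ^ (p.2.natAbs ^ 2))
  simp only [← pow_add, expo] at h
  simp only [neg_pow_eps, ← pow_mul, ← pow_add]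
  rw [← h]
  refine tsum_congr fun p => ?_
  ring

lemma th_ii {q : ℝ} (hq : |q| < 1) : th q * th (-q) = th (-q ^ 2) ^ 2 := by
  have hq' : |(-q)| < 1 := by rwa [abs_neg]
  have hq2 : |(-q^2)| < 1 := by rw [abs_neg]; exact sq_lt hq
  have h := reindex (fun p => q ^ (p.1.natAbs ^ 2) * (-q) ^ (p.2.natAbs ^ 2))
  have e : ∀ p : ℤ × ℤ, q ^ (p.1.natAbs ^ 2) * (-q) ^ (p.2.natAbs ^ 2) * (1 + eps p.1 * eps p.2) =
      q ^ (p.1.natAbs ^ 2) * (-q) ^ (p.2.natAbs ^ 2) + (-q) ^ (p.1.natAbs ^ 2) * q ^ (p.2.natAbs ^ 2) := by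
    intro p
    have : eps p.2 * eps p.2 = 1 := by rw [eps_eq]; split_ifs <;> norm_num
    simp only [neg_pow_eps]
    linear_combination (q ^ (p.1.natAbs ^ 2) * q ^ (p.2.natAbs ^ 2) * eps p.1) * this
  simp only [e] at h
  rw [(sumP hq hq').tsum_add (sumP hq' hq), ← th_mul hq hq', ← th_mul hq' hq] at h
  rw [sq (th _), th_mul hq2 hq2]
  have e2 : ∑' p : ℤ × ℤ, q ^ ((p.1 + p.2).natAbs ^ 2) * (-q) ^ ((p.1 - p.2).natAbs ^ 2) =
      ∑' p : ℤ × ℤ, (-q^2) ^ (p.1.natAbs ^ 2) * (-q^2) ^ (p.2.natAbs ^ 2) := by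
    refine tsum_congr fun p => ?_
    simp only [neg_pow_eps]
    have : eps (p.1 - p.2) = eps p.1 * eps p.2 := by
      simp only [eps_eq, Int.even_sub]
      split_ifs <;> simp_all
    rw [this, mul_left_comm, ← pow_add, expo, pow_add, pow_mul, pow_mul]
    ring
  rw [← e2]
  linarith

noncomputable def hC (z : ℂ) : ℂ := ∑' n : ℕ, z ^ (n ^ 2 + 2 * n)

noncomputable def thC (z : ℂ) : ℂ := 1 + 2 * z * hC z

lemma hC_diff {z : ℂ} (hz : ‖z‖ < 1) : DifferentiableAt ℂ hC z := by
  obtain ⟨r, hr, hr1⟩ := exists_between hz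
  have hr0 : 0 ≤ r := (norm_nonneg z).trans hr.le
  have : DifferentiableOn ℂ hC (Metric.ball 0 r) := by
    apply Complex.differentiableOn_tsum_of_summable_norm (u := fun n : ℕ => r ^ n) (summable_geometric_of_lt_one hr0 hr1)
    · intro i; fun_prop
    · exact Metric.isOpen_ball
    · intro i w hw
      rw [norm_pow]
      have hw' : ‖w‖ < r := by simpa using hw
      calc ‖w‖ ^ (i ^ 2 + 2 * i) ≤ r ^ (i ^ 2 + 2 * i) := by gcongr
        _ ≤ r ^ i := pow_le_pow_of_le_one hr0 hr1.le (by nlinarith)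
  exact this.differentiableAt (Metric.isOpen_ball.mem_nhds (by simpa using hr))

lemma thC_diff {z : ℂ} (hz : ‖z‖ < 1) : DifferentiableAt ℂ thC z := by
  have := hC_diff hz
  unfold thC
  fun_prop

lemma th_thC {q : ℝ} (hq : |q| < 1) : thC q = th q := by
  have h1 : Summable fun n : ℕ => q ^ ((n + 1) ^ 2) := by
    have := (sumT hq).comp_injective (i := fun n : ℕ => ((n : ℤ) + 1)) (fun a b h => by simpa using h)
    refine this.congr fun n => ?_
    simp only [Function.comp]
    congr 2
  have h2 : th q = 1 + 2 * ∑' n : ℕ, q ^ ((n + 1) ^ 2) := by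
    have h3 : HasSum (fun n : ℕ => q ^ (((n : ℤ)).natAbs ^ 2)) (1 + ∑' n : ℕ, q ^ ((n + 1) ^ 2)) := by
      have := h1.hasSum
      have h4 := hasSum_nat_add_iff (f := fun n : ℕ => q ^ (n ^ 2)) 1 (g := ∑' n : ℕ, q ^ ((n + 1) ^ 2))
      have h5 := h4.1 this
      rw [add_comm]
      simpa using h5
    have h4 : HasSum (fun n : ℕ => q ^ ((-((n : ℤ) + 1)).natAbs ^ 2)) (∑' n : ℕ, q ^ ((n + 1) ^ 2)) := by
      convert h1.hasSum using 4 with n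
      omega
    have := (HasSum.of_nat_of_neg_add_one (f := fun n : ℤ => q ^ (n.natAbs ^ 2)) h3 h4).tsum_eq
    rw [th, this]; ring
  rw [h2, thC, hC]
  push_cast
  rw [mul_assoc, ← tsum_mul_left]
  congr 2
  refine tsum_congr fun n => ?_
  ring

noncomputable def dth (q : ℝ) : ℝ := (deriv thC q).re

lemma th_deriv {q : ℝ} (hq : |q| < 1) : HasDerivAt th (dth q) q := by
  have hn : ‖(q:ℂ)‖ < 1 := by simpa using hq
  have := (thC_diff hn).hasDerivAt.real_of_complex
  refine this.congr_of_eventuallyEq ?_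
  have : ∀ᶠ x : ℝ in 𝓝 q, |x| < 1 := (continuous_abs.tendsto q).eventually (gt_mem_nhds hq)
  filter_upwards [this] with x hx
  rw [th_thC hx]; simp

lemma th_cont {q : ℝ} (hq : |q| < 1) : ContinuousAt th q := (th_deriv hq).continuousAt

lemma th_zero : th 0 = 1 := by
  have := th_thC (q := 0) (by simp)
  simp [thC] at this
  exact_mod_cast this.symm

lemma dth_zero : dth 0 = 2 := by
  have h : HasDerivAt thC (2 * hC 0) 0 := by
    have h1 := (hC_diff (z := 0) (by simp)).hasDerivAt
    have h2 := (((hasDerivAt_id (0:ℂ)).const_mul 2).mul h1).const_add 1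
    refine h2.congr_deriv ?_
    simp
  have h0 : hC 0 = 1 := by
    unfold hC
    rw [tsum_eq_single 0]
    · simp
    · intro n hn
      apply zero_pow
      positivity
  unfold dth
  rw [Complex.ofReal_zero, h.deriv, h0]; simp

lemma dth_cont : ContinuousAt dth 0 := by
  have h1 : DifferentiableOn ℂ thC (Metric.ball 0 1) := fun z hz =>
    (thC_diff (by simpa using hz)).differentiableWithinAt
  have h2 : DifferentiableAt ℂ (deriv thC) ((0:ℝ):ℂ) := 
    (h1.deriv Metric.isOpen_ball).differentiableAt (Metric.isOpen_ball.mem_nhds (by simp))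
  have h3 : ContinuousAt (fun x : ℝ => deriv thC x) 0 := 
    ContinuousAt.comp (f := fun x : ℝ => (x:ℂ)) h2.continuousAt Complex.continuous_ofReal.continuousAt
  exact Complex.continuous_re.continuousAt.comp h3
end S13

namespace S13
open MeasureTheory Filter Topology Set

lemma abs_lt_of {q : ℝ} (hq : q ∈ Ioo (0:ℝ) 1) : |q| < 1 := by rw [abs_of_pos hq.1]; exact hq.2

lemma sq_mem {q : ℝ} (hq : q ∈ Ioo (0:ℝ) 1) : q ^ 2 ∈ Ioo (0:ℝ) 1 :=
  ⟨pow_pos hq.1 2, pow_lt_one₀ hq.1.le hq.2 (by norm_num)⟩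

lemma pw_mem {q : ℝ} (hq : q ∈ Ioo (0:ℝ) 1) (n : ℕ) : q ^ (2 ^ n) ∈ Ioo (0:ℝ) 1 :=
  ⟨pow_pos hq.1 _, pow_lt_one₀ hq.1.le hq.2 (by positivity)⟩

lemma pw_succ (q : ℝ) (n : ℕ) : q ^ (2 ^ (n + 1)) = (q ^ (2 ^ n)) ^ 2 := by
  rw [← pow_mul, pow_succ]

lemma pw_lim {q : ℝ} (hq : q ∈ Ioo (0:ℝ) 1) : Tendsto (fun n : ℕ => q ^ (2 ^ n)) atTop (𝓝 0) :=
  (tendsto_pow_atTop_nhds_zero_of_lt_one hq.1.le hq.2).comp (tendsto_pow_atTop_atTop_of_one_lt (by norm_num))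

lemma pw_lim' {q : ℝ} (hq : q ∈ Ioo (0:ℝ) 1) : Tendsto (fun n : ℕ => q ^ (2 ^ n)) atTop (𝓝[>] 0) :=
  tendsto_nhdsWithin_iff.2 ⟨pw_lim hq, Eventually.of_forall fun n => (pw_mem hq n).1⟩

lemma th_ge {q : ℝ} (hq : q ∈ Ioo (0:ℝ) 1) : 1 ≤ th q := by
  have := (sumT (abs_lt_of hq)).le_tsum 0 (fun n _ => pow_nonneg hq.1.le _)
  unfold th; simpa using this

lemma th_pos {q : ℝ} (hq : q ∈ Ioo (0:ℝ) 1) : 0 < th q := by linarith [th_ge hq]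

lemma th_neg_lt {q : ℝ} (hq : q ∈ Ioo (0:ℝ) 1) : th (-q) < th q := by
  unfold th
  refine Summable.tsum_lt_tsum (i := 1) (fun n => ?_) ?_ (sumT (by rw [abs_neg]; exact abs_lt_of hq)) (sumT (abs_lt_of hq))
  · simp only
    refine (le_abs_self _).trans ?_
    rw [abs_pow, abs_neg, abs_of_pos hq.1]
  · simp; linarith [hq.1]

lemma th_lim {q : ℝ} (hq : q ∈ Ioo (0:ℝ) 1) : Tendsto (fun n : ℕ => th (q ^ (2 ^ n))) atTop (𝓝 1) := by
  have : Tendsto th (𝓝 0) (𝓝 1) := by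
    have := th_cont (q := 0) (by simp)
    rwa [ContinuousAt, th_zero] at this
  exact this.comp (pw_lim hq)

lemma th_lim_neg {q : ℝ} (hq : q ∈ Ioo (0:ℝ) 1) : Tendsto (fun n : ℕ => th (-q ^ (2 ^ n))) atTop (𝓝 1) := by
  have : Tendsto th (𝓝 0) (𝓝 1) := by
    have := th_cont (q := 0) (by simp)
    rwa [ContinuousAt, th_zero] at this
  refine this.comp ?_
  simpa using (pw_lim hq).neg

lemma th_neg_pos {q : ℝ} (hq : q ∈ Ioo (0:ℝ) 1) : 0 < th (-q) := by
  have h := th_ii (abs_lt_of hq)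
  have h0 : th (-q) ≠ 0 := by
    intro h0
    have : ∀ n : ℕ, th (-q ^ (2 ^ n)) = 0 := by
      intro n
      induction n with
      | zero => simpa using h0
      | succ n ih =>
        have := th_ii (abs_lt_of (pw_mem hq n))
        rw [ih, mul_zero, ← pw_succ] at this
        exact pow_eq_zero_iff (two_ne_zero) |>.1 this.symm
    have hl := th_lim_neg hq
    simp only [this] at hl
    exact zero_ne_one (tendsto_nhds_unique tendsto_const_nhds hl)
  have h1 : 0 ≤ th (-q) := by
    by_contra hc
    have := mul_neg_of_pos_of_neg (th_pos hq) (not_le.1 hc)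
    rw [h] at this
    exact absurd this (not_lt.2 (sq_nonneg _))
  exact lt_of_le_of_ne h1 h0.symm

noncomputable def DD (q : ℝ) : ℝ := th q ^ 4 - th (-q) ^ 4

lemma DD_pos {q : ℝ} (hq : q ∈ Ioo (0:ℝ) 1) : 0 < DD q := by
  have h1 := th_neg_pos hq
  have h2 := th_neg_lt hq
  unfold DD
  have := pow_lt_pow_left₀ h2 h1.le (n := 4) (by norm_num)
  linarith

lemma th_sq {q : ℝ} (hq : q ∈ Ioo (0:ℝ) 1) : th (q ^ 2) ^ 2 = (th q ^ 2 + th (-q) ^ 2) / 2 := by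
  have := th_i (abs_lt_of hq); linarith

lemma DD_sq {q : ℝ} (hq : q ∈ Ioo (0:ℝ) 1) : DD (q ^ 2) = (th q ^ 2 - th (-q) ^ 2) ^ 2 / 4 := by
  have h1 := th_sq hq
  have h2 := th_ii (abs_lt_of hq)
  unfold DD
  rw [show th (q^2) ^ 4 = (th (q^2) ^ 2) ^ 2 by ring, show th (-q^2) ^ 4 = (th (-q^2) ^ 2) ^ 2 by ring, h1, ← h2]
  ring

lemma dth_i {q : ℝ} (hq : q ∈ Ioo (0:ℝ) 1) :
    th q * dth q - th (-q) * dth (-q) = 4 * q * th (q ^ 2) * dth (q ^ 2) := by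
  have ha := abs_lt_of hq
  have hn : HasDerivAt (fun x => th (-x)) (-dth (-q)) q := by
    have := (th_deriv (q := -q) (by rwa [abs_neg])).comp q (hasDerivAt_neg q)
    exact this.congr_deriv (by ring)
  have h2 : HasDerivAt (fun x => th (x ^ 2)) (dth (q ^ 2) * (2 * q)) q := by
    have := HasDerivAt.comp (h₂ := th) (h := fun x : ℝ => x ^ 2) q (th_deriv (sq_lt ha)) (hasDerivAt_pow 2 q)
    exact this.congr_deriv (by simp)
  have hl := ((th_deriv ha).pow 2).add (hn.pow 2)
  have hr := (h2.pow 2).const_mul 2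
  have : ∀ᶠ x : ℝ in 𝓝 q, |x| < 1 := (continuous_abs.tendsto q).eventually (gt_mem_nhds ha)
  have e := hl.unique (hr.congr_of_eventuallyEq (by
    filter_upwards [this] with x hx
    exact th_i hx))
  simp at e
  linear_combination e / 2

lemma dth_ii {q : ℝ} (hq : q ∈ Ioo (0:ℝ) 1) :
    dth q * th (-q) - th q * dth (-q) = - 4 * q * th (-q ^ 2) * dth (-q ^ 2) := by
  have ha := abs_lt_of hq
  have hn : HasDerivAt (fun x => th (-x)) (-dth (-q)) q := by
    have := (th_deriv (q := -q) (by rwa [abs_neg])).comp q (hasDerivAt_neg q)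
    exact this.congr_deriv (by ring)
  have h2 : HasDerivAt (fun x => th (-x ^ 2)) (dth (-q ^ 2) * (- (2 * q))) q := by
    have := (th_deriv (q := -q ^ 2) (by rw [abs_neg]; exact (sq_lt ha))).comp q (hasDerivAt_pow 2 q).neg
    exact this.congr_deriv (by simp)
  have hl := ((th_deriv ha)).mul hn
  have hr := (h2.pow 2)
  have : ∀ᶠ x : ℝ in 𝓝 q, |x| < 1 := (continuous_abs.tendsto q).eventually (gt_mem_nhds ha)
  have e := hl.unique (hr.congr_of_eventuallyEq (by
    filter_upwards [this] with x hx
    exact th_ii hx))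
  simp at e
  linear_combination e

noncomputable def Rq (q : ℝ) : ℝ := 4 * (dth (-q) / th (-q) + dth q / th q) * (q / DD q)

lemma Rq_sq {q : ℝ} (hq : q ∈ Ioo (0:ℝ) 1) : Rq (q ^ 2) = Rq q := by
  have d1 := dth_i hq
  have d2 := dth_ii hq
  have hA := th_pos hq
  have hB := th_neg_pos hq
  have hAB := th_neg_lt hq
  have hA2 := th_pos (sq_mem hq)
  have hB2 := th_neg_pos (sq_mem hq)
  have e1 := th_sq hq
  have e2 := th_ii (abs_lt_of hq)
  have eD := DD_sq hq
  have hq0 := hq.1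
  have f1 : dth (q ^ 2) / th (q ^ 2) = (th q * dth q - th (-q) * dth (-q)) / (4 * q) / ((th q ^ 2 + th (-q) ^ 2) / 2) := by
    rw [d1, ← e1]; field_simp
  have f2 : dth (-q ^ 2) / th (-q ^ 2) = (dth q * th (-q) - th q * dth (-q)) / (-4 * q) / (th q * th (-q)) := by
    rw [d2, e2]; field_simp
  unfold Rq
  rw [f1, f2, eD, DD]
  generalize th q = A at *
  generalize th (-q) = B at *
  generalize dth q = a at *
  generalize dth (-q) = b at *
  have g1 : A - B ≠ 0 := by linarith
  have g2 : A + B ≠ 0 := by linarith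
  rw [show A ^ 4 - B ^ 4 = (A - B) * (A + B) * (A ^ 2 + B ^ 2) by ring, show A ^ 2 - B ^ 2 = (A - B) * (A + B) by ring]
  field_simp
  ring

lemma q_div_DD : Tendsto (fun q : ℝ => q / DD q) (𝓝[>] 0) (𝓝 (1 / 16)) := by
  have h0 := th_deriv (q := 0) (by simp)
  have hn : HasDerivAt (fun x => th (-x)) (-dth (0)) 0 := by
    have h0' := th_deriv (q := -0) (by simp)
    have := h0'.comp 0 (hasDerivAt_neg 0)
    refine this.congr_deriv (by simp)
  have hD : HasDerivAt DD 16 0 := by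
    have := (h0.pow 4).sub (hn.pow 4)
    refine this.congr_deriv ?_
    simp [th_zero, dth_zero]; norm_num
  have h1 := hD.tendsto_slope
  have h2 : Tendsto (slope DD 0) (𝓝[>] 0) (𝓝 16) := h1.mono_left (nhdsWithin_mono _ (fun x hx => ne_of_gt hx))
  have h3 := h2.inv₀ (by norm_num)
  rw [one_div]
  refine h3.congr fun q => ?_
  simp [slope, DD, th_zero]
  ring

lemma Rq_eq {q : ℝ} (hq : q ∈ Ioo (0:ℝ) 1) : Rq q = 1 := by
  have h1 : ∀ n : ℕ, Rq (q ^ (2 ^ n)) = Rq q := by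
    intro n
    induction n with
    | zero => simp
    | succ n ih => rw [pw_succ, Rq_sq (pw_mem hq n), ih]
  have h2 : Tendsto (fun n : ℕ => Rq (q ^ (2 ^ n))) atTop (𝓝 (4 * (2 / 1 + 2 / 1) * (1 / 16))) := by
    have hd : Tendsto dth (𝓝 0) (𝓝 2) := by
      have := dth_cont
      rwa [ContinuousAt, dth_zero] at this
    have hl : Tendsto (fun n : ℕ => -q ^ (2 ^ n)) atTop (𝓝 0) := by simpa using (pw_lim hq).neg
    exact ((((hd.comp hl).div (th_lim_neg hq) (by norm_num)).add ((hd.comp (pw_lim hq)).div (th_lim hq) (by norm_num))).const_mul 4).mul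
      (q_div_DD.comp (pw_lim' hq))
  simp only [h1] at h2
  have := tendsto_nhds_unique tendsto_const_nhds h2
  rw [this]; norm_num

noncomputable def kap (q : ℝ) : ℝ := th (-q) ^ 2 / th q ^ 2

lemma kap_deriv {q : ℝ} (hq : q ∈ Ioo (0:ℝ) 1) : HasDerivAt kap (-(kap q * DD q / (2 * q))) q := by
  have ha := abs_lt_of hq
  have hn : HasDerivAt (fun x => th (-x)) (-dth (-q)) q := by
    have := (th_deriv (q := -q) (by rwa [abs_neg])).comp q (hasDerivAt_neg q)
    exact this.congr_deriv (by ring)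
  have hA := th_pos hq
  have hB := th_neg_pos hq
  have h := (hn.pow 2).div ((th_deriv ha).pow 2) (pow_ne_zero 2 hA.ne')
  refine h.congr_deriv ?_
  have hR := Rq_eq hq
  have hD := DD_pos hq
  have hq0 := hq.1
  have : DD q / (2 * q) = 2 * (dth (-q) / th (-q) + dth q / th q) := by
    unfold Rq at hR
    field_simp at hR ⊢
    linear_combination -hR
  rw [mul_div_assoc, this, kap]
  simp
  field_simp
  ring

lemma kap_mem {q : ℝ} (hq : q ∈ Ioo (0:ℝ) 1) : kap q ∈ Ioo (0:ℝ) 1 := by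
  have hA := th_pos hq
  have hB := th_neg_pos hq
  refine ⟨by unfold kap; positivity, ?_⟩
  unfold kap
  rw [div_lt_one (by positivity)]
  exact pow_lt_pow_left₀ (th_neg_lt hq) hB.le (by norm_num)

lemma kap_sq {q : ℝ} (hq : q ∈ Ioo (0:ℝ) 1) : kap q ≤ kap (q ^ 2) ^ 2 := by
  have hk := kap_mem hq
  have hA := th_pos hq
  have hB := th_neg_pos hq
  have : kap (q ^ 2) ^ 2 = 4 * kap q / (1 + kap q) ^ 2 := by
    unfold kap
    rw [th_sq hq, ← th_ii (abs_lt_of hq)]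
    field_simp
    ring
  rw [this, le_div_iff₀ (by have := hk.1; positivity)]
  obtain ⟨h1, h2⟩ := hk
  have : (1 + kap q) ^ 2 ≤ 4 := by nlinarith
  nlinarith

noncomputable def qy (y : ℝ) : ℝ := Real.exp (-(π * y))

lemma qy_mem {y : ℝ} (hy : 0 < y) : qy y ∈ Ioo (0:ℝ) 1 :=
  ⟨Real.exp_pos _, by rw [qy, Real.exp_lt_one_iff]; have := Real.pi_pos; nlinarith⟩

lemma ky_deriv {y : ℝ} (hy : 0 < y) :
    HasDerivAt (fun y => kap (qy y)) (π / 2 * kap (qy y) * DD (qy y)) y := by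
  have h1 : HasDerivAt qy (- π * qy y) y := by
    have := (((hasDerivAt_id y).const_mul π).neg).exp
    refine this.congr_deriv ?_
    simp [qy]; ring
  refine ((kap_deriv (qy_mem hy)).comp y h1).congr_deriv ?_
  have := (qy_mem hy).1
  field_simp

lemma ky_mono : StrictMonoOn (fun y => kap (qy y)) (Ioi 0) := by
  apply strictMonoOn_of_deriv_pos (convex_Ioi 0)
  · intro y hy
    exact (ky_deriv hy).continuousAt.continuousWithinAt
  · intro y hy
    rw [interior_Ioi] at hy
    rw [(ky_deriv hy).deriv]
    have h1 := (kap_mem (qy_mem hy)).1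
    have h2 := DD_pos (qy_mem hy)
    have := Real.pi_pos
    positivity

lemma ky_image : (fun y => kap (qy y)) '' (Ioi 0) = Ioo 0 1 := by
  apply Subset.antisymm
  · rintro _ ⟨y, hy, rfl⟩
    exact kap_mem (qy_mem hy)
  · intro c hc
    have hq1 := qy_mem one_pos
    have h1 : ∃ y ∈ Ioi (0:ℝ), kap (qy y) < c := by
      have hb : ∀ n : ℕ, kap (qy (1 / 2 ^ n)) ≤ kap (qy 1) ^ (2 ^ n) := by
        intro n
        induction n with
        | zero => simp
        | succ n ih =>
          have hm : qy (1 / 2 ^ (n + 1)) ∈ Ioo (0:ℝ) 1 := qy_mem (by positivity)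
          have e : qy (1 / 2 ^ (n + 1)) ^ 2 = qy (1 / 2 ^ n) := by
            unfold qy
            rw [← Real.exp_nat_mul]
            congr 1
            push_cast
            field_simp
            ring
          refine (kap_sq hm).trans ?_
          rw [e, pw_succ]
          exact pow_le_pow_left₀ (kap_mem (qy_mem (by positivity))).1.le ih 2
      have := (pw_lim (kap_mem hq1)).eventually (gt_mem_nhds hc.1)
      obtain ⟨n, hn⟩ := this.exists
      exact ⟨1 / 2 ^ n, by simp, (hb n).trans_lt hn⟩
    have h2 : ∃ y ∈ Ioi (0:ℝ), c < kap (qy y) := by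
      have h3 : Tendsto (fun n : ℕ => kap (qy 1 ^ (2 ^ n))) atTop (𝓝 (1 ^ 2 / 1 ^ 2)) :=
        ((th_lim_neg hq1).pow 2).div ((th_lim hq1).pow 2) (by norm_num)
      have := h3.eventually (lt_mem_nhds (show c < (1:ℝ)^2/1^2 by simpa using hc.2))
      obtain ⟨n, hn⟩ := this.exists
      refine ⟨2 ^ n, by simp, ?_⟩
      have e : qy 1 ^ (2 ^ n) = qy (2 ^ n) := by
        unfold qy
        rw [← Real.exp_nat_mul]
        congr 1
        push_cast
        ring
      rwa [← e]
    obtain ⟨y1, hy1, hc1⟩ := h1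
    obtain ⟨y2, hy2, hc2⟩ := h2
    exact isPreconnected_Ioi.intermediate_value hy1 hy2
      (fun y hy => (ky_deriv hy).continuousAt.continuousWithinAt) ⟨hc1.le, hc2.le⟩

lemma JI_th {q : ℝ} (hq : q ∈ Ioo (0:ℝ) 1) : JI 1 (kap q) = ENNReal.ofReal (π / 2 * th q ^ 2) := by
  have hA := th_pos hq
  have h := JI_agm (a := fun n : ℕ => th (q ^ (2 ^ n)) ^ 2) (b := fun n : ℕ => th (-q ^ (2 ^ n)) ^ 2)
    (fun n => by have := th_neg_pos (pw_mem hq n); positivity)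
    (fun n => pow_lt_pow_left₀ (th_neg_lt (pw_mem hq n)) (th_neg_pos (pw_mem hq n)).le (by norm_num))
    (fun n => by simp only [pw_succ]; exact th_sq (pw_mem hq n))
    (fun n => by
      simp only [pw_succ]
      rw [← th_ii (abs_lt_of (pw_mem hq n)), ← mul_pow, Real.sqrt_sq]
      exact mul_nonneg (th_pos (pw_mem hq n)).le (th_neg_pos (pw_mem hq n)).le)
    (by simpa using (th_lim hq).pow 2) (by simpa using (th_lim_neg hq).pow 2)
  simp only [pow_zero, pow_one] at h
  rw [JI_scale (c := th q ^ 2) (by positivity), mul_one, kap, mul_div_cancel₀ _ (by positivity), h,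
    ← ENNReal.ofReal_mul (by positivity)]
  congr 1; ring
end S13

namespace S13
open MeasureTheory Filter Topology Set

noncomputable def Pn (x : ℝ) (n : ℕ) : ℝ := ∏ i ∈ Finset.range n, (1 - x ^ (i + 1))
noncomputable def EE (x : ℝ) : ℝ := ∏' n : ℕ, (1 - x ^ (n + 1))

lemma Pn_succ (x : ℝ) (n : ℕ) : Pn x (n + 1) = Pn x n * (1 - x ^ (n + 1)) := by
  unfold Pn; rw [Finset.prod_range_succ]

lemma sumpow {x : ℝ} (hx : |x| < 1) : Summable fun n : ℕ => ‖-x ^ (n + 1)‖ := by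
  have h : Summable fun n : ℕ => |x| ^ n := summable_geometric_of_lt_one (abs_nonneg x) hx
  simpa using (summable_nat_add_iff 1).2 h

lemma EE_mult {x : ℝ} (hx : |x| < 1) : Multipliable fun n : ℕ => (1 - x ^ (n + 1)) := by
  simpa [sub_eq_add_neg] using multipliable_one_add_of_summable (sumpow hx)

lemma EE_lim {x : ℝ} (hx : |x| < 1) : Tendsto (Pn x) atTop (𝓝 (EE x)) :=
  (EE_mult hx).hasProd.tendsto_prod_nat

lemma fac_mem {x : ℝ} (hx : x ∈ Ioo (0:ℝ) 1) (n : ℕ) : 0 < 1 - x ^ (n + 1) ∧ 1 - x ^ (n + 1) ≤ 1 := by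
  have h1 := pow_lt_one₀ hx.1.le hx.2 (n := n + 1) (by omega)
  have h2 := pow_pos hx.1 (n + 1)
  constructor <;> linarith

lemma Pn_pos {x : ℝ} (hx : x ∈ Ioo (0:ℝ) 1) (n : ℕ) : 0 < Pn x n :=
  Finset.prod_pos fun i _ => (fac_mem hx i).1

lemma Pn_le {x : ℝ} (hx : x ∈ Ioo (0:ℝ) 1) (n : ℕ) : Pn x n ≤ 1 :=
  Finset.prod_le_one (fun i _ => (fac_mem hx i).1.le) fun i _ => (fac_mem hx i).2

lemma Pn_anti {x : ℝ} (hx : x ∈ Ioo (0:ℝ) 1) : Antitone (Pn x) := by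
  refine antitone_nat_of_succ_le fun n => ?_
  rw [Pn_succ]
  have h1 := Pn_pos hx n
  have h2 := (fac_mem hx n).2
  nlinarith

lemma EE_le {x : ℝ} (hx : x ∈ Ioo (0:ℝ) 1) (n : ℕ) : EE x ≤ Pn x n :=
  (Pn_anti hx).le_of_tendsto (EE_lim (abs_lt_of hx)) n

lemma EE_pos {x : ℝ} (hx : x ∈ Ioo (0:ℝ) 1) : 0 < EE x := by
  have h1 : 0 ≤ EE x := ge_of_tendsto' (EE_lim (abs_lt_of hx)) fun n => (Pn_pos hx n).le
  have h2 : EE x ≠ 0 := by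
    have := tprod_one_add_ne_zero_of_summable (f := fun n : ℕ => -x ^ (n + 1))
      (fun i => by have := (fac_mem hx i).1; rw [← sub_eq_add_neg]; exact this.ne') (sumpow (abs_lt_of hx))
    simpa [EE, sub_eq_add_neg] using this
  exact lt_of_le_of_ne h1 h2.symm

lemma EE_ge {x : ℝ} (hx : x ∈ Ioo (0:ℝ) 1) : 1 - x / (1 - x) ≤ EE x := by
  refine ge_of_tendsto' (EE_lim (abs_lt_of hx)) fun n => ?_
  have h1 : 1 - x * (∑ i ∈ Finset.range n, x ^ i) ≤ Pn x n := by
    induction n with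
    | zero => simp [Pn]
    | succ n ih =>
      rw [Pn_succ, Finset.sum_range_succ]
      have h3 := Pn_le hx n
      have h4 := pow_pos hx.1 (n + 1)
      have : x * x ^ n = x ^ (n + 1) := by ring
      nlinarith
  have h2 : ∑ i ∈ Finset.range n, x ^ i ≤ 1 / (1 - x) := by
    have h3 : 0 < 1 - x := by linarith [hx.2]
    rw [le_div_iff₀ h3, geom_sum_mul_neg]
    linarith [pow_pos hx.1 n]
  have := mul_le_mul_of_nonneg_left h2 hx.1.le
  have e : x / (1 - x) = x * (1 / (1 - x)) := by ring
  linarith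

lemma EE_tend : Tendsto EE (𝓝[>] 0) (𝓝 1) := by
  have hm : ∀ᶠ x : ℝ in 𝓝[>] 0, x ∈ Ioo (0:ℝ) 1 := Ioo_mem_nhdsGT one_pos
  have h1 : Tendsto (fun x : ℝ => 1 - x / (1 - x)) (𝓝[>] 0) (𝓝 1) := by
    have : ContinuousAt (fun x : ℝ => 1 - x / (1 - x)) 0 := by
      refine continuousAt_const.sub (continuousAt_id.div (continuousAt_const.sub continuousAt_id) (by simp))
    have h := this.tendsto
    simp only [zero_div, sub_zero] at h
    exact h.mono_left nhdsWithin_le_nhds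
  refine tendsto_of_tendsto_of_tendsto_of_le_of_le' h1 tendsto_const_nhds ?_ ?_
  · filter_upwards [hm] with x hx using EE_ge hx
  · filter_upwards [hm] with x hx
    simpa [Pn] using EE_le hx 0

/- finite Jacobi triple product -/
noncomputable def rr (p : ℝ) (m : ℤ) : ℝ := if m < 0 then 0 else (Pn p m.toNat)⁻¹

lemma rr_rec {p : ℝ} (hp : p ∈ Ioo (0:ℝ) 1) (m : ℤ) : rr p (m - 1) = (1 - p ^ m) * rr p m := by
  rcases lt_trichotomy m 0 with h | h | h
  · rw [rr, rr, if_pos (by omega), if_pos h, mul_zero]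
  · subst h; simp [rr]
  · obtain ⟨k, rfl⟩ : ∃ k : ℕ, m = (k : ℤ) + 1 := ⟨(m - 1).toNat, by omega⟩
    rw [rr, rr, if_neg (by omega), if_neg (by omega)]
    have e1 : ((k : ℤ) + 1 - 1).toNat = k := by omega
    have e2 : ((k : ℤ) + 1).toNat = k + 1 := by omega
    rw [e1, e2, Pn_succ]
    have h1 := Pn_pos hp k
    have h2 := (fac_mem hp k).1
    have : p ^ ((k : ℤ) + 1) = p ^ (k + 1) := by norm_cast
    rw [this]
    field_simp

lemma rr_bd {p : ℝ} (hp : p ∈ Ioo (0:ℝ) 1) (m : ℤ) : |rr p m| ≤ (EE p)⁻¹ := by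
  have h0 := EE_pos hp
  unfold rr
  split_ifs
  · simp [h0.le]
  · rw [abs_of_pos (inv_pos.2 (Pn_pos hp _))]
    exact inv_anti₀ h0 (EE_le hp _)

lemma rr_lim {p : ℝ} (hp : p ∈ Ioo (0:ℝ) 1) : Tendsto (rr p) atTop (𝓝 (EE p)⁻¹) := by
  have h1 : Tendsto (fun m : ℤ => (Pn p m.toNat)⁻¹) atTop (𝓝 (EE p)⁻¹) := by
    refine ((EE_lim (abs_lt_of hp)).comp ?_).inv₀ (EE_pos hp).ne'
    exact tendsto_atTop.2 fun b => by
      filter_upwards [eventually_ge_atTop (b : ℤ)] with m hm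
      omega
  refine h1.congr' ?_
  filter_upwards [eventually_ge_atTop (0 : ℤ)] with m hm
  rw [rr, if_neg (by omega)]

noncomputable def cc (q : ℝ) (n : ℕ) (j : ℤ) : ℝ :=
  q ^ (j.natAbs ^ 2) * Pn (q ^ 2) (2 * n) * rr (q ^ 2) (n + j) * rr (q ^ 2) (n - j)

lemma pow_nat (q : ℝ) (j : ℤ) : q ^ (j.natAbs ^ 2) = q ^ (j ^ 2 : ℤ) := by
  rw [← zpow_natCast]; congr 1; push_cast; rw [sq_abs]

lemma cc_rec {q : ℝ} (h0 : q ≠ 0) (hq : q ^ 2 ∈ Ioo (0:ℝ) 1) (n : ℕ) (j : ℤ) :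
    cc q (n + 1) j = (1 + (q ^ (2 * n + 1)) ^ 2) * cc q n j +
      q ^ (2 * n + 1) * (cc q n (j - 1) + cc q n (j + 1)) := by
  have hp0 : q ^ 2 ≠ 0 := pow_ne_zero 2 h0
  unfold cc
  simp only [pow_nat]
  have a1 : rr (q ^ 2) (n + j) = (1 - (q ^ 2) ^ ((n : ℤ) + 1 + j)) * rr (q ^ 2) (n + 1 + j) := by
    rw [← rr_rec hq]; congr 1; ring
  have a2 : rr (q ^ 2) (n - j) = (1 - (q ^ 2) ^ ((n : ℤ) + 1 - j)) * rr (q ^ 2) (n + 1 - j) := by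
    rw [← rr_rec hq]; congr 1; ring
  have a3 : rr (q ^ 2) (n + (j - 1)) = (1 - (q ^ 2) ^ ((n : ℤ) + j)) * ((1 - (q ^ 2) ^ ((n : ℤ) + 1 + j)) * rr (q ^ 2) (n + 1 + j)) := by
    rw [← a1, ← rr_rec hq]; congr 1; ring
  have a4 : rr (q ^ 2) (n - (j + 1)) = (1 - (q ^ 2) ^ ((n : ℤ) - j)) * ((1 - (q ^ 2) ^ ((n : ℤ) + 1 - j)) * rr (q ^ 2) (n + 1 - j)) := by
    rw [← a2, ← rr_rec hq]; congr 1; ring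
  have a5 : rr (q ^ 2) (n - (j - 1)) = rr (q ^ 2) (n + 1 - j) := by congr 1; ring
  have a6 : rr (q ^ 2) (n + (j + 1)) = rr (q ^ 2) (n + 1 + j) := by congr 1; ring
  rw [a3, a4, a5, a6, a1, a2]
  push_cast
  rw [show 2 * (n + 1) = 2 * n + 1 + 1 by ring, Pn_succ, Pn_succ]
  generalize rr (q ^ 2) (n + 1 + j) = a
  generalize rr (q ^ 2) (n + 1 - j) = b
  generalize Pn (q ^ 2) (2 * n) = P
  have b1 : q ^ ((j - 1) ^ 2 : ℤ) = q ^ (j ^ 2 : ℤ) * q / (q ^ 2) ^ j := by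
    rw [← zpow_natCast q 2, ← zpow_mul, ← zpow_add_one₀ h0, ← zpow_sub₀ h0]; congr 1; push_cast; ring
  have b2 : q ^ ((j + 1) ^ 2 : ℤ) = q ^ (j ^ 2 : ℤ) * q * (q ^ 2) ^ j := by
    rw [← zpow_natCast q 2, ← zpow_mul, ← zpow_add_one₀ h0, ← zpow_add₀ h0]; congr 1; push_cast; ring
  rw [b1, b2]
  generalize q ^ (j ^ 2 : ℤ) = u
  rw [zpow_add₀ hp0, zpow_add₀ hp0, zpow_add₀ hp0, zpow_sub₀ hp0, zpow_sub₀ hp0, zpow_add₀ hp0, zpow_one, zpow_natCast]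
  have ht : (q ^ 2) ^ j ≠ 0 := zpow_ne_zero _ hp0
  generalize (q ^ 2) ^ j = t at *
  have e1 : (q ^ 2) ^ (2 * n + 1) = ((q ^ 2) ^ n) ^ 2 * q ^ 2 := by ring
  have e2 : (q ^ 2) ^ (2 * n + 1 + 1) = ((q ^ 2) ^ n) ^ 2 * (q ^ 2) ^ 2 := by ring
  have e3 : q ^ (2 * n + 1) = (q ^ 2) ^ n * q := by ring
  rw [e1, e2, e3]
  generalize (q ^ 2) ^ n = s
  field_simp
  ring

lemma cc_sum {q : ℝ} (h0 : q ≠ 0) (hq : q ^ 2 ∈ Ioo (0:ℝ) 1) (n : ℕ) :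
    HasSum (cc q n) (∏ k ∈ Finset.range n, (1 + q ^ (2 * k + 1)) ^ 2) := by
  induction n with
  | zero =>
    have : cc q 0 0 = 1 := by simp [cc, Pn, rr]
    rw [Finset.prod_range_zero, ← this]
    apply hasSum_single
    intro j hj
    rcases lt_or_gt_of_ne hj with h | h
    · have : rr (q ^ 2) ((0:ℕ) + j) = 0 := by rw [rr, if_pos (by push_cast; omega)]
      simp only [cc, this, mul_zero, zero_mul]
    · have : rr (q ^ 2) ((0:ℕ) - j) = 0 := by rw [rr, if_pos (by push_cast; omega)]
      simp only [cc, this, mul_zero]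
  | succ n ih =>
    have s1 : HasSum (fun j => cc q n (j - 1)) (∏ k ∈ Finset.range n, (1 + q ^ (2 * k + 1)) ^ 2) :=
      (Equiv.hasSum_iff (f := cc q n) (Equiv.subRight (1:ℤ))).2 ih
    have s2 : HasSum (fun j => cc q n (j + 1)) (∏ k ∈ Finset.range n, (1 + q ^ (2 * k + 1)) ^ 2) :=
      (Equiv.hasSum_iff (f := cc q n) (Equiv.addRight (1:ℤ))).2 ih
    have := (ih.mul_left (1 + (q ^ (2 * n + 1)) ^ 2)).add ((s1.add s2).mul_left (q ^ (2 * n + 1)))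
    rw [funext (cc_rec h0 hq n), Finset.prod_range_succ]
    refine Eq.subst (motive := fun z => HasSum _ z) ?_ this
    ring

noncomputable def OO (q : ℝ) : ℝ := ∏' k : ℕ, (1 + q ^ (2 * k + 1))

lemma OO_mult {q : ℝ} (hq : |q| < 1) : Multipliable fun k : ℕ => 1 + q ^ (2 * k + 1) := by
  apply multipliable_one_add_of_summable
  have h : Summable fun n : ℕ => |q| ^ n := summable_geometric_of_lt_one (abs_nonneg q) hq
  have := h.comp_injective (i := fun k : ℕ => 2 * k + 1) (fun a b h => by simp at h; exact h)
  simpa [Function.comp_def] using this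

lemma jtp {q : ℝ} (h0 : q ≠ 0) (ha : |q| < 1) : th q = EE (q ^ 2) * OO q ^ 2 := by
  have hq : q ^ 2 ∈ Ioo (0:ℝ) 1 := ⟨by positivity, by rw [sq_lt_one_iff_abs_lt_one]; exact ha⟩
  have hE := EE_pos hq
  have h1 : Tendsto (fun n : ℕ => ∏ k ∈ Finset.range n, (1 + q ^ (2 * k + 1)) ^ 2) atTop (𝓝 (OO q ^ 2)) := by
    simp only [Finset.prod_pow]
    exact ((OO_mult ha).hasProd.tendsto_prod_nat).pow 2
  have h2 : Tendsto (fun n : ℕ => ∑' j : ℤ, cc q n j) atTop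
      (𝓝 (∑' j : ℤ, q ^ (j.natAbs ^ 2) * EE (q ^ 2) * (EE (q ^ 2))⁻¹ * (EE (q ^ 2))⁻¹)) := by
    apply tendsto_tsum_of_dominated_convergence
      (bound := fun j : ℤ => ‖q ^ (j.natAbs ^ 2)‖ * ((EE (q ^ 2))⁻¹ * (EE (q ^ 2))⁻¹))
    · exact (sumN ha).mul_right _
    · intro j
      have l1 : Tendsto (fun n : ℕ => (n : ℤ) + j) atTop atTop :=
        tendsto_atTop_add_const_right _ _ tendsto_natCast_atTop_atTop
      have l2 : Tendsto (fun n : ℕ => (n : ℤ) - j) atTop atTop :=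
        tendsto_atTop_add_const_right _ _ tendsto_natCast_atTop_atTop
      have l3 : Tendsto (fun n : ℕ => 2 * n) atTop atTop :=
        tendsto_atTop_mono (fun n => by simp only [id]; omega) tendsto_id
      have k3 : Tendsto (fun n : ℕ => Pn (q ^ 2) (2 * n)) atTop (𝓝 (EE (q ^ 2))) := (EE_lim (abs_lt_of hq)).comp l3
      have k1 : Tendsto (fun n : ℕ => rr (q ^ 2) (n + j)) atTop (𝓝 (EE (q ^ 2))⁻¹) := (rr_lim hq).comp l1
      have k2 : Tendsto (fun n : ℕ => rr (q ^ 2) (n - j)) atTop (𝓝 (EE (q ^ 2))⁻¹) := (rr_lim hq).comp l2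
      unfold cc
      exact ((k3.const_mul _).mul k1).mul k2
    · refine Eventually.of_forall fun n j => ?_
      unfold cc
      rw [norm_mul, norm_mul, norm_mul, mul_assoc]
      have b1 : ‖Pn (q ^ 2) (2 * n)‖ ≤ 1 := by
        rw [Real.norm_of_nonneg (Pn_pos hq _).le]; exact Pn_le hq _
      refine mul_le_mul ?_ ?_ (by positivity) (by positivity)
      · exact mul_le_of_le_one_right (norm_nonneg _) b1
      · exact mul_le_mul (rr_bd hq _) (rr_bd hq _) (by positivity) (by positivity)
  simp only [(cc_sum h0 hq _).tsum_eq] at h2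
  have := tendsto_nhds_unique h1 h2
  simp only [mul_assoc, tsum_mul_right] at this
  rw [this, th]
  field_simp

lemma th_neg_EE {q : ℝ} (hq : q ∈ Ioo (0:ℝ) 1) : th (-q) = EE q ^ 2 / EE (q ^ 2) := by
  have ha := abs_lt_of hq
  have hE := EE_pos (sq_mem hq)
  have h := jtp (q := -q) (by simpa using hq.1.ne') (by rwa [abs_neg])
  have e0 : ∀ k : ℕ, 1 + (-q) ^ (2 * k + 1) = 1 - q ^ (2 * k + 1) := fun k => by
    rw [Odd.neg_pow ⟨k, rfl⟩]; ring
  have e1 : OO (-q) * EE (q ^ 2) = EE q := by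
    have h1 : OO (-q) = ∏' k : ℕ, (1 - q ^ (2 * k + 1)) := by
      unfold OO; simp only [e0]
    have e2 : ∀ k : ℕ, 1 - (q ^ 2) ^ (k + 1) = 1 - q ^ (2 * k + 1 + 1) := fun k => by
      rw [← pow_mul]; ring_nf
    have h2 : EE (q ^ 2) = ∏' k : ℕ, (1 - q ^ (2 * k + 1 + 1)) := by
      unfold EE; simp only [e2]
    rw [h1, h2, EE]
    apply tprod_even_mul_odd (f := fun n : ℕ => 1 - q ^ (n + 1))
    · have := OO_mult (q := -q) (by rwa [abs_neg])
      simpa only [e0] using this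
    · have := EE_mult (abs_lt_of (sq_mem hq))
      simpa only [e2] using this
  rw [h, neg_sq, ← e1]
  field_simp

noncomputable def XX (q : ℝ) : ℝ := DD q / (16 * q * EE (q ^ 4) ^ 8 / EE (q ^ 2) ^ 4)

lemma XX_pos {q : ℝ} (hq : q ∈ Ioo (0:ℝ) 1) : 0 < XX q := by
  have h1 := EE_pos (sq_mem hq)
  have h2 := EE_pos (sq_mem (sq_mem hq))
  have h3 := DD_pos hq
  have h4 := hq.1
  rw [← pow_mul] at h2
  unfold XX
  positivity

lemma XX_sq {q : ℝ} (hq : q ∈ Ioo (0:ℝ) 1) : XX (q ^ 2) = XX q ^ 2 := by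
  have m2 := sq_mem hq
  have m4 := sq_mem m2
  have m8 := sq_mem m4
  have e4 : (q ^ 2) ^ 2 = q ^ 4 := by ring
  have e8 : (q ^ 4) ^ 2 = q ^ 8 := by ring
  rw [e4] at m4 m8
  rw [e8] at m8
  have h2 := EE_pos m2
  have h4 := EE_pos m4
  have h8 := EE_pos m8
  have hq0 := hq.1
  have f1 := th_neg_EE m2
  have f2 := th_neg_EE m4
  have f3 := th_ii (abs_lt_of m2)
  rw [e4] at f1 f3
  rw [e8] at f2
  have f4 : th (q ^ 2) = EE (q ^ 4) ^ 5 / (EE (q ^ 8) ^ 2 * EE (q ^ 2) ^ 2) := by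
    rw [f1, f2] at f3
    field_simp at f3 ⊢
    linear_combination f3
  have f5 : DD q ^ 2 = 16 * DD (q ^ 2) * th (q ^ 2) ^ 4 := by
    rw [DD_sq hq, show th (q^2) ^ 4 = (th (q^2) ^ 2) ^ 2 by ring, th_sq hq, DD]
    ring
  unfold XX
  rw [div_pow, f5, f4, e4, show (q ^ 2) ^ 4 = q ^ 8 by ring]
  field_simp

lemma XX_eq {q : ℝ} (hq : q ∈ Ioo (0:ℝ) 1) : XX q = 1 := by
  have h1 : ∀ n : ℕ, Real.log (XX q) = Real.log (XX (q ^ (2 ^ n))) * (1 / 2) ^ n := by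
    intro n
    induction n with
    | zero => simp
    | succ n ih =>
      rw [pw_succ, XX_sq (pw_mem hq n), Real.log_pow, ih]
      push_cast; ring
  have hz : ∀ k : ℕ, k ≠ 0 → Tendsto (fun n : ℕ => EE ((q ^ (2 ^ n)) ^ k)) atTop (𝓝 1) := by
    intro k hk
    refine EE_tend.comp (tendsto_nhdsWithin_iff.2 ⟨?_, Eventually.of_forall fun n => pow_pos (pw_mem hq n).1 _⟩)
    have := (pw_lim hq).pow k
    rwa [zero_pow hk] at this
  have h2 : Tendsto (fun n : ℕ => XX (q ^ (2 ^ n))) atTop (𝓝 1) := by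
    have a := (((q_div_DD.comp (pw_lim' hq)).const_mul 16).mul (((hz 4 (by norm_num)).pow 8).div ((hz 2 (by norm_num)).pow 4) (by norm_num))).inv₀ (by norm_num)
    have e : (16 * (1 / 16) * (1 ^ 8 / 1 ^ 4) : ℝ)⁻¹ = 1 := by norm_num
    rw [e] at a
    refine a.congr fun n => ?_
    have := DD_pos (pw_mem hq n)
    have := (pw_mem hq n).1
    simp only [Function.comp, XX, Pi.div_apply]
    rw [← inv_div]
    field_simp
  have h3 : Tendsto (fun n : ℕ => Real.log (XX (q ^ (2 ^ n))) * (1 / 2) ^ n) atTop (𝓝 (Real.log 1 * 0)) :=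
    (h2.log (by norm_num)).mul (tendsto_pow_atTop_nhds_zero_of_lt_one (by norm_num) (by norm_num))
  simp only [← h1] at h3
  have h4 := tendsto_nhds_unique tendsto_const_nhds h3
  rw [mul_zero] at h4
  exact Real.eq_one_of_pos_of_log_eq_zero (XX_pos hq) h4

lemma key {q : ℝ} (hq : q ∈ Ioo (0:ℝ) 1) :
    DD q * th q ^ 2 * th (-q) ^ 2 = 16 * (q * EE (q ^ 2) ^ 4 * EE (q ^ 4) ^ 4) := by
  have m2 := sq_mem hq
  have m4 := sq_mem m2
  have e4 : (q ^ 2) ^ 2 = q ^ 4 := by ring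
  rw [e4] at m4
  have h2 := EE_pos m2
  have h4 := EE_pos m4
  have hq0 := hq.1
  have f1 := XX_eq hq
  have f2 := th_neg_EE m2
  rw [e4] at f2
  rw [XX, div_eq_one_iff_eq (by positivity)] at f1
  rw [mul_assoc, ← mul_pow, th_ii (abs_lt_of hq), f2, f1]
  field_simp

lemma gg_real {y : ℝ} (hy : 0 < y) :
    gg (y * I) = ((DD (qy y) * th (qy y) ^ 2 * th (-qy y) ^ 2 / 16 : ℝ) : ℂ) := by
  have hq := qy_mem hy
  have hE : ∀ x : ℝ, |x| < 1 → ((EE x : ℝ) : ℂ) = ∏' n : ℕ, (1 - (x:ℂ) ^ (n + 1)) := by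
    intro x hx
    have := (EE_mult hx).map_tprod (Complex.ofRealHom) Complex.continuous_ofReal
    unfold EE
    simpa using this
  have hη : ∀ t : ℝ, 0 < t → dedekindEta (t * I) = ((Real.exp (-(π * t / 12)) * EE (qy t ^ 2) : ℝ) : ℂ) := by
    intro t ht
    rw [Complex.ofReal_mul, hE _ (abs_lt_of (sq_mem (qy_mem ht))), dedekindEta]
    congr 1
    · rw [Complex.ofReal_exp]; congr 1; push_cast
      linear_combination (π * t / 12 : ℂ) * Complex.I_sq
    · refine tprod_congr fun n => ?_
      congr 1
      rw [qy, ← Complex.ofReal_pow, ← Real.exp_nat_mul, ← Real.exp_nat_mul, Complex.ofReal_exp]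
      congr 1; push_cast
      linear_combination (2 * π * (n + 1) * t : ℂ) * Complex.I_sq
  rw [key hq, gg, show 2 * ((y:ℂ) * I) = ((2 * y : ℝ) : ℂ) * I by push_cast; ring, hη y hy, hη (2 * y) (by positivity),
    ← Complex.ofReal_pow, ← Complex.ofReal_pow, ← Complex.ofReal_mul]
  congr 1
  have e1 : qy (2 * y) ^ 2 = qy y ^ 4 := by
    unfold qy; rw [← Real.exp_nat_mul, ← Real.exp_nat_mul]; congr 1; push_cast; ring
  have e2 : Real.exp (-(π * y / 12)) ^ 4 * Real.exp (-(π * (2 * y) / 12)) ^ 4 = qy y := by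
    unfold qy; rw [← Real.exp_nat_mul, ← Real.exp_nat_mul, ← Real.exp_add]; congr 1; push_cast; ring
  rw [e1, mul_pow, mul_pow, ← e2]
  ring
end S13

namespace S13
open MeasureTheory Filter Topology Set ENNReal

noncomputable def hh (y : ℝ) : ℝ := DD (qy y) * th (qy y) ^ 2 * th (-qy y) ^ 2 / 16

lemma hh_int : IntegrableOn hh (Ioi 0) := by
  have h := gg_split.1
  have h2 : IntegrableOn (fun v : ℝ => (gg (v * I)).re) (Ioi 0) := h.re
  refine h2.congr_fun (fun y hy => ?_) measurableSet_Ioi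
  show (gg (y * I)).re = hh y
  rw [gg_real hy, Complex.ofReal_re, hh]

lemma hh_nonneg {y : ℝ} (hy : 0 < y) : 0 ≤ hh y := by
  have := DD_pos (qy_mem hy)
  unfold hh; positivity

lemma gg_int : ∫ v in Ioi (0:ℝ), gg (v * I) = ((∫ y in Ioi (0:ℝ), hh y : ℝ) : ℂ) := by
  rw [← integral_complex_ofReal]
  refine setIntegral_congr_fun measurableSet_Ioi fun y hy => ?_
  rw [gg_real hy, hh]

lemma sq_int : ∫⁻ x in Ioo (0:ℝ) 1, JI 1 x ^ 2 = ENNReal.ofReal (2 * π ^ 3 * ∫ y in Ioi (0:ℝ), hh y) := by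
  rw [← ky_image, lintegral_image_eq_lintegral_abs_deriv_mul measurableSet_Ioi
    (fun y hy => (ky_deriv hy).hasDerivWithinAt) ky_mono.injOn, ← integral_const_mul,
    ofReal_integral_eq_lintegral_ofReal (hh_int.const_mul _)]
  · refine setLIntegral_congr_fun measurableSet_Ioi fun y hy => ?_
    have hq := qy_mem hy
    have h1 := (kap_mem hq).1
    have h2 := DD_pos hq
    have h3 := th_pos hq
    have hp := Real.pi_pos
    rw [JI_th hq, abs_of_pos (by positivity), ← ENNReal.ofReal_pow (by positivity), ← ENNReal.ofReal_mul (by positivity)]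
    congr 1
    unfold kap hh
    field_simp
    ring
  · filter_upwards [ae_restrict_mem measurableSet_Ioi] with y hy
    have := hh_nonneg hy
    have hp := Real.pi_pos
    simp only [Pi.zero_apply]
    positivity

lemma lint_I (f : ℝ → ℝ≥0∞) : ∫⁻ x : unitInterval, f x = ∫⁻ x in Ioo (0:ℝ) 1, f x := by
  rw [Measure.restrict_congr_set Ioo_ae_eq_Icc]
  exact lintegral_subtype_comap measurableSet_Icc f

noncomputable def GG (x : unitInterval) : ℝ := (JI 1 x).toReal

lemma GG_meas : Measurable GG := by
  have h : Measurable fun x : ℝ => ∫⁻ s in Ioo (0:ℝ) 1, kern x s := kern_meas.lintegral_prod_right'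
  have e : GG = fun x : unitInterval => (∫⁻ s in Ioo (0:ℝ) 1, kern x s).toReal := by
    funext x
    rw [GG, JI_kern x.2.1]
  rw [e]
  exact (h.comp measurable_subtype_coe).ennreal_toReal

lemma JI_fin {x : ℝ} (hx : x ∈ Ioo (0:ℝ) 1) : JI 1 x ≠ ∞ :=
  ((JI_le hx.1 hx.2).trans_lt ENNReal.ofReal_lt_top).ne

lemma GG_sq : ∫⁻ x : unitInterval, ENNReal.ofReal (GG x ^ 2) = ENNReal.ofReal (2 * π ^ 3 * ∫ y in Ioi (0:ℝ), hh y) := by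
  rw [← sq_int]
  refine (lint_I fun x => ENNReal.ofReal ((JI 1 x).toReal ^ 2)).trans ?_
  refine setLIntegral_congr_fun measurableSet_Ioo fun x hx => ?_
  rw [ENNReal.ofReal_pow ENNReal.toReal_nonneg, ENNReal.ofReal_toReal (JI_fin hx)]

lemma N_nonneg : 0 ≤ ∫ y in Ioi (0:ℝ), hh y :=
  setIntegral_nonneg measurableSet_Ioi fun _ hy => hh_nonneg hy

lemma GG_L2 : MemLp GG 2 := by
  rw [memLp_two_iff_integrable_sq GG_meas.aestronglyMeasurable]
  refine ⟨(GG_meas.pow_const 2).aestronglyMeasurable, ?_⟩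
  rw [hasFiniteIntegral_iff_ofReal (Eventually.of_forall fun x => sq_nonneg _), GG_sq]
  exact ENNReal.ofReal_lt_top

lemma GG_int : ∫ x : unitInterval, GG x ^ 2 = 2 * π ^ 3 * ∫ y in Ioi (0:ℝ), hh y := by
  rw [integral_eq_lintegral_of_nonneg_ae (Eventually.of_forall fun x => sq_nonneg _)
    (GG_meas.pow_const 2).aestronglyMeasurable, GG_sq, ENNReal.toReal_ofReal]
  have := N_nonneg
  have := Real.pi_pos
  positivity

lemma GG_mom (n : ℕ) : ∫ x : unitInterval, (x:ℝ) ^ (2 * n) * GG x = π ^ 2 / 4 * aa n ^ 2 := by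
  rw [integral_eq_lintegral_of_nonneg_ae]
  · have := mom n
    have e : ∫⁻ x : unitInterval, ENNReal.ofReal ((x:ℝ) ^ (2 * n) * GG x) = ENNReal.ofReal (π ^ 2 / 4 * aa n ^ 2) := by
      rw [← mom n]
      refine (lint_I fun x => ENNReal.ofReal (x ^ (2 * n) * (JI 1 x).toReal)).trans ?_
      refine setLIntegral_congr_fun measurableSet_Ioo fun x hx => ?_
      rw [ENNReal.ofReal_mul (pow_nonneg hx.1.le _), ENNReal.ofReal_toReal (JI_fin hx)]
    rw [e, ENNReal.toReal_ofReal]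
    have := Real.pi_pos
    positivity
  · exact Eventually.of_forall fun x => mul_nonneg (pow_nonneg x.2.1 _) ENNReal.toReal_nonneg
  · exact ((measurable_subtype_coe.pow_const _).mul GG_meas).aestronglyMeasurable

lemma main_sum : HasSum (fun k : ℕ => (1 + 4 * (k:ℝ)) * aa k ^ 6) (32 / π * ∫ y in Ioi (0:ℝ), hh y) := by
  have h := (parseval GG_L2 GG_mom).mul_right (16 / π ^ 4)
  rw [GG_int] at h
  have hp := Real.pi_pos
  have e : (2 * π ^ 3 * ∫ y in Ioi (0:ℝ), hh y) * (16 / π ^ 4) = 32 / π * ∫ y in Ioi (0:ℝ), hh y := by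
    generalize ∫ y in Ioi (0:ℝ), hh y = N
    field_simp
    ring
  rw [e] at h
  refine Eq.subst (motive := fun z => HasSum z _) (funext fun k => ?_) h
  field_simp
  try ring

lemma poch_aa (k : ℕ) : poch (1/2) k / (Nat.factorial k : ℂ) = ((aa k : ℝ) : ℂ) := by
  induction k with
  | zero => simp [poch, aa]
  | succ k ih =>
    rw [aa_succ, Complex.ofReal_mul, ← ih, poch, poch, Finset.prod_range_succ, Nat.factorial_succ]
    push_cast
    have h1 : (Nat.factorial k : ℂ) ≠ 0 := by exact_mod_cast Nat.factorial_ne_zero k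
    have h2 : (k : ℂ) + 1 ≠ 0 := by exact_mod_cast Nat.succ_ne_zero k
    have h3 : 1 + (k : ℂ) ≠ 0 := by rwa [add_comm]
    field_simp
    try ring
end S13

/-- `₇F₆(1/2,5/4,1/2,…,1/2; 1/4,1,…,1; 1) = ∑ₖ (1+4k)((1/2)ₖ/k!)⁶` equals `32i/π`
times the integral of `τ·η(τ)⁴η(2τ)⁴ dτ` along the straight segment from `(1+i)/2` to
`(−1+i)/2` (parametrized as `τ = t + i/2`, giving the minus sign below).  The
eta-product is `f_{8.4.a.a}(τ/2)`. -/
theorem statement13 :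
    (∑' k : ℕ, (1 + 4 * (k : ℂ)) * (poch (1/2) k / (Nat.factorial k : ℂ)) ^ 6)
      = -(32 * Complex.I / (Real.pi : ℂ)) * ∫ t in (-1/2 : ℝ)..(1/2 : ℝ),
          ((t : ℂ) + Complex.I / 2)
            * dedekindEta ((t : ℂ) + Complex.I / 2) ^ 4
            * dedekindEta (2 * (t : ℂ) + Complex.I) ^ 4 := by
  have h1 : (∑' k : ℕ, (1 + 4 * (k : ℂ)) * (poch (1/2) k / (Nat.factorial k : ℂ)) ^ 6)
      = ((32 / π * ∫ y in Set.Ioi (0:ℝ), S13.hh y : ℝ) : ℂ) := by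
    rw [← S13.main_sum.tsum_eq, Complex.ofReal_tsum]
    refine tsum_congr fun k => ?_
    rw [S13.poch_aa]; push_cast; ring
  have h2 : (∫ t in (-1/2 : ℝ)..(1/2 : ℝ),
          ((t : ℂ) + Complex.I / 2)
            * dedekindEta ((t : ℂ) + Complex.I / 2) ^ 4
            * dedekindEta (2 * (t : ℂ) + Complex.I) ^ 4)
      = ∫ t in (-1/2:ℝ)..(1/2:ℝ), ((t:ℂ)+I/2) * S13.gg ((t:ℂ)+I/2) := by
    refine intervalIntegral.integral_congr fun t _ => ?_
    simp only [S13.gg]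
    rw [show 2 * ((t:ℂ) + I / 2) = 2 * (t:ℂ) + I by ring]
    ring
  rw [h1, h2, S13.contour, S13.gg_int]
  push_cast
  linear_combination ((32 / (π:ℂ)) * ((∫ y in Set.Ioi (0:ℝ), S13.hh y : ℝ) : ℂ)) * Complex.I_sq
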